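/- arXiv:2407.20614 — 3 statements merged into one kernel-verified Lean document; each statement's English description precedes it below -/
import Mathlib

section
/- Let V be an n-dimensional vector space over the finite field 𝔽_q with n ≥ 2t+1 and t ≥ 1, and let F be a cover-free family of 2t-dimensional subspaces of V with |F| = [n-1 choose t]_q / [2t-1 choose t]_q. Then for all distinct F, F' ∈ F, dim(F ∩ F') ≤ t. -/
/-- A family of subspaces is cover-free if there are no three distinct members
`F₀, F₁, F₂` with `F₀ ≤ (F₀ ⊓ F₁) ⊔ (F₀ ⊓ F₂)`. -/
def IsCoverFree {K V : Type*} [Field K] [AddCommGroup V] [Module K V]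
    (F : Set (Submodule K V)) : Prop :=
  ¬ ∃ F₀ F₁ F₂ : Submodule K V, F₀ ∈ F ∧ F₁ ∈ F ∧ F₂ ∈ F ∧
    F₀ ≠ F₁ ∧ F₀ ≠ F₂ ∧ F₁ ≠ F₂ ∧ F₀ ≤ (F₀ ⊓ F₁) ⊔ (F₀ ⊓ F₂)

/-- The Gaussian binomial coefficient `[m choose k]_q` as a rational number. -/
def GaussQ (q m k : ℕ) : ℚ :=
  ∏ i ∈ Finset.range k, ((q : ℚ) ^ (m - i) - 1) / ((q : ℚ) ^ (k - i) - 1)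

theorem cf_finite_gl (K W : Type*) [Field K] [AddCommGroup W] [Module K W] [Finite W] :
    Finite (W ≃ₗ[K] W) :=
  Finite.of_injective (fun g : W ≃ₗ[K] W => (g : W → W)) DFunLike.coe_injective

theorem cf_extend {K W : Type*} [Field K] [AddCommGroup W] [Module K W]
    [FiniteDimensional K W] {j : ℕ} {s x : Fin j → W} (hs : LinearIndependent K s)
    (hx : LinearIndependent K x) : ∃ h : W ≃ₗ[K] W, (fun i => h (s i)) = x := by
  obtain ⟨g, hg⟩ := Submodule.exists_linearEquiv_restrict_eq
    ((Module.Basis.span hs).equiv (Module.Basis.span hx) (Equiv.refl _))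
  refine ⟨g, ?_⟩
  funext i
  have h1 := hg (Module.Basis.span hs i)
  rw [Module.Basis.equiv_apply] at h1
  rw [Module.Basis.span_apply, Module.Basis.span_apply] at h1
  simpa using h1.symm

/-- The number of automorphisms `g` with `Q (g ∘ s)`. -/
theorem cf_orbit {K W : Type*} [Field K] [AddCommGroup W] [Module K W]
    [FiniteDimensional K W] {j : ℕ} {s : Fin j → W}
    (hs : LinearIndependent K s) (Q : (Fin j → W) → Prop) :
    Nat.card {g : W ≃ₗ[K] W // Q (fun i => g (s i))} =
      Nat.card {x : Fin j → W // LinearIndependent K x ∧ Q x} *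
      Nat.card {g : W ≃ₗ[K] W // (fun i => g (s i)) = s} := by
  have hex : ∀ x : {x : Fin j → W // LinearIndependent K x ∧ Q x},
      ∃ h : W ≃ₗ[K] W, (fun i => h (s i)) = x.1 := fun x => cf_extend hs x.2.1
  choose h hh using hex
  have hli : ∀ g : W ≃ₗ[K] W, LinearIndependent K (fun i => g (s i)) := fun g =>
    hs.map' g.toLinearMap g.ker
  rw [← Nat.card_prod]
  refine Nat.card_congr
    { toFun := fun g => (⟨fun i => g.1 (s i), hli g.1, g.2⟩,
        ⟨g.1.trans (h ⟨fun i => g.1 (s i), hli g.1, g.2⟩).symm, ?_⟩)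
      invFun := fun p => ⟨p.2.1.trans (h p.1), ?_⟩
      left_inv := ?_
      right_inv := ?_ }
  · funext i
    rw [LinearEquiv.trans_apply, LinearEquiv.symm_apply_eq]
    exact (congrFun (hh ⟨fun i => g.1 (s i), hli g.1, g.2⟩) i).symm
  · have h1 : (fun i => (p.2.1.trans (h p.1)) (s i)) = p.1.1 := by
      rw [← hh p.1]
      funext i
      rw [LinearEquiv.trans_apply]
      exact congrArg _ (congrFun p.2.2 i)
    rw [h1]
    exact p.1.2.2
  · intro g
    apply Subtype.ext
    ext w
    simp
  · rintro ⟨x, g, hg⟩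
    have h1 : (fun i => (g.trans (h x)) (s i)) = x.1 := by
      rw [← hh x]
      funext i
      rw [LinearEquiv.trans_apply]
      exact congrArg _ (congrFun hg i)
    have h2 : ∀ pf, (⟨fun i => (g.trans (h x)) (s i), pf⟩ :
        {x : Fin j → W // LinearIndependent K x ∧ Q x}) = x := fun pf => Subtype.ext h1
    ext1
    · exact h2 _
    · apply Subtype.ext
      ext w
      change (h ⟨fun i => (g.trans (h x)) (s i), _⟩).symm ((h x) (g w)) = g w
      rw [h2, LinearEquiv.symm_apply_apply]

theorem cf_avg {K W : Type*} [Field K] [AddCommGroup W] [Module K W]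
    [FiniteDimensional K W] (P : Submodule K W → Prop) {j : ℕ}
    (S : Submodule K W) (hS : Module.finrank K S = j) :
    Nat.card {g : W ≃ₗ[K] W // P (S.map g.toLinearMap)} *
      Nat.card {x : Fin j → W // LinearIndependent K x} =
    Nat.card {x : Fin j → W // LinearIndependent K x ∧ P (Submodule.span K (Set.range x))} *
      Nat.card (W ≃ₗ[K] W) := by
  let b := Module.finBasisOfFinrankEq K S hS
  let s : Fin j → W := fun i => (b i : W)
  have hs : LinearIndependent K s := b.linearIndependent.map' S.subtype S.ker_subtype
  have hsp : Submodule.span K (Set.range s) = S := by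
    have : Set.range s = S.subtype '' Set.range b := by
      rw [← Set.range_comp]; rfl
    rw [this, Submodule.span_image, b.span_eq, Submodule.map_top, Submodule.range_subtype]
  have hP := cf_orbit hs (fun x => P (Submodule.span K (Set.range x)))
  have hT := cf_orbit hs (fun _ => True)
  have e1 : Nat.card {g : W ≃ₗ[K] W // True} = Nat.card (W ≃ₗ[K] W) :=
    Nat.card_congr (Equiv.subtypeUnivEquiv (fun _ => trivial))
  have e2 : ∀ g : W ≃ₗ[K] W, Submodule.span K (Set.range (fun i => g (s i))) =
      S.map g.toLinearMap := by
    intro g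
    rw [← hsp, ← Submodule.span_image, ← Set.range_comp]; rfl
  simp only [e2] at hP
  simp only [and_true] at hT
  rw [e1] at hT
  rw [hP, hT]
  ring

theorem cf_compl {K W : Type*} [Field K] [AddCommGroup W] [Module K W] [Finite W]
    (P : Submodule K W → Prop)
    (hP : ∀ A B : Submodule K W, IsCompl A B → P A ∨ P B) (A B : Submodule K W)
    (hAB : IsCompl A B) :
    Nat.card (W ≃ₗ[K] W) ≤ Nat.card {g : W ≃ₗ[K] W // P (A.map g.toLinearMap)} +
      Nat.card {g : W ≃ₗ[K] W // P (B.map g.toLinearMap)} := by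
  have := cf_finite_gl K W
  rw [← Set.ncard_univ]
  have : (Set.univ : Set (W ≃ₗ[K] W)) = {g | P (A.map g.toLinearMap)} ∪
      {g | P (B.map g.toLinearMap)} := by
    ext g
    simp only [Set.mem_univ, Set.mem_union, Set.mem_ofPred_eq, true_iff]
    apply hP
    exact (OrderIso.isCompl_iff (Submodule.orderIsoMapComap g)).1 hAB
  rw [this]
  exact Set.ncard_union_le _ _

theorem cf_spread {K W : Type*} [Field K] [Fintype K] [AddCommGroup W] [Module K W]
    [FiniteDimensional K W] (t : ℕ) (ht : 1 ≤ t) (hW : Module.finrank K W = 2 * t) :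
    ∃ (ι : Type) (_ : Fintype ι) (S : ι → Submodule K W),
      Fintype.card ι = Fintype.card K ^ t + 1 ∧ (∀ i, Module.finrank K (S i) = t) ∧
      ∀ i j, i ≠ j → IsCompl (S i) (S j) := by
  classical
  obtain ⟨p, hp⟩ := CharP.exists K
  have : Fact p.Prime := ⟨CharP.char_is_prime K p⟩
  have : NeZero t := ⟨by omega⟩
  let L := FiniteField.Extension K p t
  let : Fintype L := Fintype.ofFinite L
  have hL : Module.finrank K L = t := FiniteField.finrank_extension K p t
  have hcL : Fintype.card L = Fintype.card K ^ t := by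
    rw [← Nat.card_eq_fintype_card, ← Nat.card_eq_fintype_card]
    exact FiniteField.natCard_extension K p t
  have hLL : Module.finrank K (L × L) = 2 * t := by
    rw [Module.finrank_prod, hL]; ring
  let e : (L × L) ≃ₗ[K] W := LinearEquiv.ofFinrankEq _ _ (hLL.trans hW.symm)
  let f : Option L → (L →ₗ[K] L × L) := fun o => match o with
    | none => LinearMap.inr K L L
    | some a => LinearMap.prod LinearMap.id (LinearMap.mulLeft K a)
  have hf : ∀ o, Function.Injective (f o) := by
    intro o
    rcases o with _ | a
    · exact LinearMap.inr_injective
    · intro x y h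
      exact congrArg Prod.fst h
  have hfr : ∀ o, Module.finrank K (LinearMap.range (f o)) = t := fun o => by
    rw [LinearMap.finrank_range_of_inj (hf o), hL]
  have hdisj : ∀ o o', o ≠ o' → Disjoint (LinearMap.range (f o)) (LinearMap.range (f o')) := by
    intro o o' hne
    rw [Submodule.disjoint_def]
    rintro z ⟨x, rfl⟩ ⟨y, hy⟩
    rcases o with _ | a <;> rcases o' with _ | b
    · exact absurd rfl hne
    · simp [f, Prod.ext_iff] at hy ⊢
      rw [← hy.2, hy.1, mul_zero]
    · simp [f, Prod.ext_iff] at hy ⊢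
      simp [← hy.1]
    · simp [f, Prod.ext_iff] at hy ⊢
      obtain ⟨rfl, h2⟩ := hy
      have hab : b ≠ a := fun h => hne (by rw [h])
      have : (b - a) * y = 0 := by rw [sub_mul, h2, sub_self]
      rcases mul_eq_zero.1 this with h | h
      · exact absurd (sub_eq_zero.1 h) hab
      · simp [h]
  refine ⟨Option L, inferInstance, fun o => (LinearMap.range (f o)).map e.toLinearMap, ?_, ?_, ?_⟩
  · rw [Fintype.card_option, hcL]
  · intro o
    exact (LinearEquiv.finrank_map_eq e _).trans (hfr o)
  · intro o o' hne
    apply (OrderIso.isCompl_iff (Submodule.orderIsoMapComap e)).1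
    rw [Submodule.isCompl_iff_disjoint]
    · exact hdisj o o' hne
    · rw [hLL, hfr, hfr]; omega

theorem cf_ekr {K W : Type*} [Field K] [Fintype K] [AddCommGroup W] [Module K W]
    [FiniteDimensional K W] (P : Submodule K W → Prop)
    (hP : ∀ A B : Submodule K W, IsCompl A B → P A ∨ P B)
    (t : ℕ) (ht : 1 ≤ t) (hW : Module.finrank K W = 2 * t) :
    Fintype.card K ^ t * Nat.card {x : Fin t → W // LinearIndependent K x} ≤
    (Fintype.card K ^ t + 1) *
    Nat.card {x : Fin t → W // LinearIndependent K x ∧ P (Submodule.span K (Set.range x))} := by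
  classical
  have : Finite W := Module.finite_of_finite K
  have := cf_finite_gl K W
  let := Fintype.ofFinite (W ≃ₗ[K] W)
  obtain ⟨ι, _, S, hι, hS, hc⟩ := cf_spread (K := K) (W := W) t ht hW
  have h1 : ∀ g : W ≃ₗ[K] W, Fintype.card K ^ t ≤
      ∑ i : ι, if P ((S i).map g.toLinearMap) then 1 else 0 := by
    intro g
    rw [← Finset.card_filter]
    have h2 : (Finset.univ.filter (fun i => ¬ P ((S i).map g.toLinearMap))).card ≤ 1 := by
      rw [Finset.card_le_one]
      intro i hi j hj
      by_contra hne
      rw [Finset.mem_filter] at hi hj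
      have := hP _ _ ((OrderIso.isCompl_iff (Submodule.orderIsoMapComap g)).1 (hc i j hne))
      rcases this with h | h
      · exact hi.2 h
      · exact hj.2 h
    have h3 := Finset.card_filter_add_card_filter_not (s := (Finset.univ : Finset ι))
      (fun i => P ((S i).map g.toLinearMap))
    rw [Finset.card_univ, hι] at h3
    omega
  have h2 : Fintype.card K ^ t * Nat.card (W ≃ₗ[K] W) ≤
      ∑ i : ι, Nat.card {g : W ≃ₗ[K] W // P ((S i).map g.toLinearMap)} := by
    calc _ = ∑ g : W ≃ₗ[K] W, Fintype.card K ^ t := by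
          rw [Finset.sum_const, Finset.card_univ, Nat.card_eq_fintype_card, smul_eq_mul, mul_comm]
      _ ≤ ∑ g : W ≃ₗ[K] W, ∑ i : ι, if P ((S i).map g.toLinearMap) then 1 else 0 :=
          Finset.sum_le_sum (fun g _ => h1 g)
      _ = _ := by
          rw [Finset.sum_comm]
          apply Finset.sum_congr rfl
          intro i _
          rw [← Finset.card_filter, Nat.card_eq_fintype_card, Fintype.card_subtype]
  have h3 := Nat.mul_le_mul_right (Nat.card {x : Fin t → W // LinearIndependent K x}) h2
  rw [Finset.sum_mul, Finset.sum_congr rfl (fun i _ => cf_avg P (S i) (hS i)), Finset.sum_const,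
    Finset.card_univ, hι, smul_eq_mul] at h3
  have hpos : 0 < Nat.card (W ≃ₗ[K] W) := Nat.card_pos
  refine Nat.le_of_mul_le_mul_right ?_ hpos
  calc _ = _ := by ring
    _ ≤ _ := h3
    _ = _ := by ring

theorem cf_pair {K W : Type*} [Field K] [Fintype K] [AddCommGroup W] [Module K W]
    [FiniteDimensional K W] (P : Submodule K W → Prop)
    (hP : ∀ A B : Submodule K W, IsCompl A B → P A ∨ P B)
    (a b : ℕ) (hW : Module.finrank K W = a + b) :
    Nat.card {x : Fin a → W // LinearIndependent K x} *
      Nat.card {x : Fin b → W // LinearIndependent K x} ≤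
    Nat.card {x : Fin a → W // LinearIndependent K x ∧ P (Submodule.span K (Set.range x))} *
      Nat.card {x : Fin b → W // LinearIndependent K x} +
    Nat.card {x : Fin b → W // LinearIndependent K x ∧ P (Submodule.span K (Set.range x))} *
      Nat.card {x : Fin a → W // LinearIndependent K x} := by
  have : Finite W := Module.finite_of_finite K
  have := cf_finite_gl K W
  obtain ⟨A, hA⟩ : ∃ A : Submodule K W, Module.finrank K A = a :=
    by
      obtain ⟨s, hs⟩ := exists_linearIndependent_of_le_finrank (R := K) (M := W) (n := a) (by omega)
      exact ⟨Submodule.span K (Set.range s), by rw [finrank_span_eq_card hs, Fintype.card_fin]⟩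
  obtain ⟨B, hAB⟩ := Submodule.exists_isCompl A
  have hB : Module.finrank K B = b := by
    have := Submodule.finrank_add_eq_of_isCompl hAB
    omega
  have h1 := cf_compl P hP A B hAB
  have h2 := cf_avg P A hA
  have h3 := cf_avg P B hB
  have hpos : 0 < Nat.card (W ≃ₗ[K] W) := Nat.card_pos
  refine Nat.le_of_mul_le_mul_right ?_ hpos
  have h4 := Nat.mul_le_mul_left (Nat.card {x : Fin a → W // LinearIndependent K x} *
      Nat.card {x : Fin b → W // LinearIndependent K x}) h1
  refine h4.trans (le_of_eq ?_)
  rw [mul_add, add_mul]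
  congr 1
  · rw [mul_right_comm, mul_right_comm _ _ (Nat.card (W ≃ₗ[K] W)), ← h2]; ring
  · rw [mul_assoc, mul_right_comm _ _ (Nat.card (W ≃ₗ[K] W)), ← h3]; ring
/-- `U` is contained in the member `A` and in no other member of the family. -/
def CFOwn {K V : Type*} [Field K] [AddCommGroup V] [Module K V]
    (F : Set (Submodule K V)) (A U : Submodule K V) : Prop :=
  U ≤ A ∧ ∀ B ∈ F, U ≤ B → B = A

theorem cf_card_compl {K V : Type*} [Field K] [Fintype K] [AddCommGroup V] [Module K V]
    [FiniteDimensional K V] (U : Submodule K V) :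
    Nat.card {v : V // v ∉ U} =
      Fintype.card K ^ Module.finrank K V - Fintype.card K ^ Module.finrank K U := by
  have : Finite V := Module.finite_of_finite K
  have h1 := Set.ncard_compl (U : Set V)
  have h2 : Nat.card V = Fintype.card K ^ Module.finrank K V := by
    rw [Module.natCard_eq_pow_finrank (K := K), Nat.card_eq_fintype_card]
  have h3 : Nat.card U = Fintype.card K ^ Module.finrank K U := by
    rw [Module.natCard_eq_pow_finrank (K := K), Nat.card_eq_fintype_card]
  rw [← h2, ← h3]
  exact h1

theorem cf_step {K V : Type*} [Field K] [Fintype K] [AddCommGroup V] [Module K V]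
    [FiniteDimensional K V] {j d : ℕ} (R : (Fin j → V) → Prop)
    (U : (Fin j → V) → Submodule K V)
    (hU : ∀ x, LinearIndependent K x → R x →
      Submodule.span K (Set.range x) ≤ U x ∧ Module.finrank K (U x) = d) :
    Nat.card {y : Fin (j + 1) → V // LinearIndependent K y ∧ R (Fin.tail y) ∧
      y 0 ∉ U (Fin.tail y)} =
    Nat.card {x : Fin j → V // LinearIndependent K x ∧ R x} *
      (Fintype.card K ^ Module.finrank K V - Fintype.card K ^ d) := by
  classical
  have : Finite V := Module.finite_of_finite K
  let e : {y : Fin (j + 1) → V // LinearIndependent K y ∧ R (Fin.tail y) ∧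
      y 0 ∉ U (Fin.tail y)} ≃
      Σ x : {x : Fin j → V // LinearIndependent K x ∧ R x}, {v : V // v ∉ U x.1} :=
    { toFun := fun y => ⟨⟨Fin.tail y.1, (linearIndependent_finSucc.1 y.2.1).1, y.2.2.1⟩,
        ⟨y.1 0, y.2.2.2⟩⟩
      invFun := fun p => ⟨Fin.cons p.2.1 p.1.1,
        linearIndependent_finCons.2 ⟨p.1.2.1, fun h => p.2.2 ((hU _ p.1.2.1 p.1.2.2).1 h)⟩,
        by simpa using p.1.2.2, by simpa using p.2.2⟩
      left_inv := fun y => Subtype.ext (Fin.cons_self_tail _)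
      right_inv := fun p => rfl }
  have := Fintype.ofFinite {x : Fin j → V // LinearIndependent K x ∧ R x}
  rw [Nat.card_congr e, Nat.card_sigma]
  rw [Finset.sum_congr rfl (fun x _ => by
    rw [cf_card_compl, (hU _ x.2.1 x.2.2).2]), Finset.sum_const, Finset.card_univ,
    Nat.card_eq_fintype_card, smul_eq_mul]

theorem cf_restrict {K V : Type*} [Field K] [AddCommGroup V] [Module K V]
    (F : Set (Submodule K V)) (A : Submodule K V) (j : ℕ) :
    Nat.card {x : Fin j → V // LinearIndependent K x ∧
      CFOwn F A (Submodule.span K (Set.range x))} =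
    Nat.card {x : Fin j → A // LinearIndependent K x ∧
      CFOwn F A ((Submodule.span K (Set.range x)).map A.subtype)} := by
  have hsp : ∀ x : Fin j → A, (Submodule.span K (Set.range x)).map A.subtype =
      Submodule.span K (Set.range (fun i => (x i : V))) := by
    intro x
    rw [← Submodule.span_image, ← Set.range_comp]; rfl
  have hli : ∀ x : Fin j → A, LinearIndependent K (fun i => (x i : V)) ↔
      LinearIndependent K x := fun x =>
    LinearMap.linearIndependent_iff (v := x) A.subtype A.ker_subtype
  symm
  refine Nat.card_congr
    { toFun := fun x => ⟨fun i => (x.1 i : V), (hli _).2 x.2.1, by rw [← hsp]; exact x.2.2⟩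
      invFun := fun x => ⟨fun i => ⟨x.1 i, x.2.2.1 (Submodule.subset_span ⟨i, rfl⟩)⟩,
        (hli _).1 x.2.1, by rw [hsp]; exact x.2.2⟩
      left_inv := fun x => rfl
      right_inv := fun x => rfl }

theorem cf_excl {α β : Type*} [Finite β] (F : Finset α) (E1 E2 E3 : α → β → Prop)
    (L : β → Prop) (l1 : ∀ A y, E1 A y → L y) (l2 : ∀ A y, E2 A y → L y)
    (l3 : ∀ A y, E3 A y → L y)
    (x12 : ∀ A y, E1 A y → ¬ E2 A y) (x13 : ∀ A y, E1 A y → ¬ E3 A y)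
    (x23 : ∀ A y, E2 A y → ¬ E3 A y)
    (hu : ∀ y, ∀ A ∈ F, ∀ B ∈ F, (E1 A y ∨ E2 A y ∨ E3 A y) → (E1 B y ∨ E2 B y ∨ E3 B y) →
      A = B) :
    ∑ A ∈ F, (Nat.card {y // E1 A y} + Nat.card {y // E2 A y} + Nat.card {y // E3 A y}) ≤
      Nat.card {y // L y} := by
  classical
  have := Fintype.ofFinite β
  have hcnt : ∀ E : β → Prop, Nat.card {y // E y} = ∑ y : β, if E y then 1 else 0 := by
    intro E
    rw [← Finset.card_filter, Nat.card_eq_fintype_card, Fintype.card_subtype]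
  simp only [hcnt, ← Finset.sum_add_distrib]
  rw [Finset.sum_comm]
  apply Finset.sum_le_sum
  intro y _
  by_cases hy : L y
  swap
  · have n1 : ∀ A, ¬ E1 A y := fun A h => hy (l1 A y h)
    have n2 : ∀ A, ¬ E2 A y := fun A h => hy (l2 A y h)
    have n3 : ∀ A, ¬ E3 A y := fun A h => hy (l3 A y h)
    simp [n1, n2, n3]
  rw [if_pos hy]
  have hex : ∀ A ∈ F, ((if E1 A y then 1 else 0) + (if E2 A y then 1 else 0) +
      (if E3 A y then 1 else 0)) = if (E1 A y ∨ E2 A y ∨ E3 A y) then 1 else 0 := by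
    intro A hA
    have x12 := x12 A y
    have x13 := x13 A y
    have x23 := x23 A y
    clear hu l1 l2 l3
    by_cases h1 : E1 A y <;> by_cases h2 : E2 A y <;> by_cases h3 : E3 A y <;> simp_all
  rw [Finset.sum_congr rfl hex, ← Finset.card_filter, Finset.card_le_one]
  intro A hA B hB
  rw [Finset.mem_filter] at hA hB
  exact hu y A hA.1 B hB.1 hA.2 hB.2

theorem cf_main {K V : Type*} [Field K] [Fintype K] [AddCommGroup V] [Module K V]
    [FiniteDimensional K V] (F : Finset (Submodule K V)) (s d : ℕ)
    (hF : ∀ A ∈ F, Module.finrank K A = d) :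
    ∑ A ∈ F, (Nat.card {x : Fin s → V // LinearIndependent K x ∧
          CFOwn (F : Set (Submodule K V)) A (Submodule.span K (Set.range x))} *
          (Fintype.card K ^ Module.finrank K V - Fintype.card K ^ d) *
          (Fintype.card K ^ Module.finrank K V - Fintype.card K ^ (s + 1)) +
        Nat.card {x : Fin (s + 1) → V // LinearIndependent K x ∧
          CFOwn (F : Set (Submodule K V)) A (Submodule.span K (Set.range x))} *
          (Fintype.card K ^ Module.finrank K V - Fintype.card K ^ d) +
        Nat.card {x : Fin (s + 2) → V // LinearIndependent K x ∧
          CFOwn (F : Set (Submodule K V)) A (Submodule.span K (Set.range x))}) ≤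
      Nat.card {x : Fin (s + 2) → V // LinearIndependent K x} := by
  classical
  have : Finite V := Module.finite_of_finite K
  have := Fintype.ofFinite V
  let own := fun A U => CFOwn (F : Set (Submodule K V)) A U
  let sp := fun (j : ℕ) (x : Fin j → V) => Submodule.span K (Set.range x)
  let E1 : Submodule K V → (Fin (s + 2) → V) → Prop := fun A y =>
    LinearIndependent K y ∧ own A (sp s (Fin.tail (Fin.tail y))) ∧ Fin.tail y 0 ∉ A
  let E2 : Submodule K V → (Fin (s + 2) → V) → Prop := fun A y =>
    LinearIndependent K y ∧ own A (sp (s + 1) (Fin.tail y)) ∧ y 0 ∉ A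
  let E3 : Submodule K V → (Fin (s + 2) → V) → Prop := fun A y =>
    LinearIndependent K y ∧ own A (sp (s + 2) y)
  have c1 : ∀ A ∈ F, Nat.card {x : Fin s → V // LinearIndependent K x ∧
          CFOwn (F : Set (Submodule K V)) A (Submodule.span K (Set.range x))} *
          (Fintype.card K ^ Module.finrank K V - Fintype.card K ^ d) *
          (Fintype.card K ^ Module.finrank K V - Fintype.card K ^ (s + 1)) =
        Nat.card {y // E1 A y} := by
    intro A hA
    have h1 := cf_step (K := K) (V := V) (j := s) (d := d) (fun x => own A (sp s x)) (fun _ => A)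
      (fun x _ hx => ⟨hx.1, hF A hA⟩)
    have h2 := cf_step (K := K) (V := V) (j := s + 1) (d := s + 1)
      (fun x => own A (sp s (Fin.tail x)) ∧ x 0 ∉ A) (fun x => sp (s + 1) x)
      (fun x hx _ => ⟨le_rfl, by
        show Module.finrank K (Submodule.span K (Set.range x)) = s + 1
        rw [finrank_span_eq_card hx, Fintype.card_fin]⟩)
    rw [← h1, ← h2]
    refine Nat.card_congr (Equiv.subtypeEquivRight (fun y => ?_))
    constructor
    · rintro ⟨a, b, c⟩
      exact ⟨a, b⟩
    · rintro ⟨a, b⟩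
      exact ⟨a, b, (linearIndependent_finSucc.1 a).2⟩
  have c2 : ∀ A ∈ F, Nat.card {x : Fin (s + 1) → V // LinearIndependent K x ∧
          CFOwn (F : Set (Submodule K V)) A (Submodule.span K (Set.range x))} *
          (Fintype.card K ^ Module.finrank K V - Fintype.card K ^ d) =
        Nat.card {y // E2 A y} := by
    intro A hA
    exact (cf_step (K := K) (V := V) (j := s + 1) (d := d) (fun x => own A (sp (s + 1) x))
      (fun _ => A) (fun x _ hx => ⟨hx.1, hF A hA⟩)).symm
  have hle1 : ∀ (j : ℕ) (y : Fin (j + 1) → V), sp j (Fin.tail y) ≤ sp (j + 1) y := by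
    intro j y
    apply Submodule.span_mono
    rintro _ ⟨i, rfl⟩
    exact ⟨i.succ, rfl⟩
  have hmem : ∀ (j : ℕ) (y : Fin (j + 1) → V), y 0 ∈ sp (j + 1) y := fun j y =>
    Submodule.subset_span ⟨0, rfl⟩
  rw [Finset.sum_congr rfl (g := fun A => Nat.card {y // E1 A y} + Nat.card {y // E2 A y} +
    Nat.card {y // E3 A y}) (fun A hA => by rw [c1 A hA, c2 A hA])]
  have a1 : ∀ y : Fin (s + 2) → V, _ := hle1 (s + 1)
  have a2 : ∀ y : Fin (s + 2) → V, _ := fun y => hle1 s (Fin.tail y)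
  have m1 : ∀ y : Fin (s + 2) → V, _ := hmem (s + 1)
  have m2 : ∀ y : Fin (s + 2) → V, _ := fun y => hmem s (Fin.tail y)
  refine cf_excl F E1 E2 E3 (fun y => LinearIndependent K y) (fun A y h => h.1)
    (fun A y h => h.1) (fun A y h => h.1) (fun A y h h' => h.2.2 (h'.2.1.1 (m2 y)))
    (fun A y h h' => h.2.2 (h'.2.1 (a1 y (m2 y)))) (fun A y h h' => h.2.2 (h'.2.1 (m1 y))) ?_
  intro y
  replace a1 := a1 y
  replace a2 := a2 y
  have key : ∀ A, (E1 A y ∨ E2 A y ∨ E3 A y) → sp s (Fin.tail (Fin.tail y)) ≤ A ∧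
      (¬ E1 A y → sp (s + 1) (Fin.tail y) ≤ A) ∧
      (E3 A y → sp (s + 2) y ≤ A) := by
    intro A h
    rcases h with h | h | h
    · exact ⟨h.2.1.1, fun h' => absurd h h', fun h' => h'.2.1⟩
    · exact ⟨a2.trans h.2.1.1, fun _ => h.2.1.1, fun h' => h'.2.1⟩
    · exact ⟨(a2.trans a1).trans h.2.1, fun _ => a1.trans h.2.1, fun h' => h'.2.1⟩
  intro A hA B hB eA eB
  have kA := key A eA
  have kB := key B eB
  by_cases hA1 : E1 A y
  · exact (hA1.2.1.2 B hB kB.1).symm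
  by_cases hB1 : E1 B y
  · exact hB1.2.1.2 A hA kA.1
  by_cases hA2 : E2 A y
  · exact (hA2.2.1.2 B hB (kB.2.1 hB1)).symm
  by_cases hB2 : E2 B y
  · exact hB2.2.1.2 A hA (kA.2.1 hA1)
  have hA3 : E3 A y := (eA.resolve_left hA1).resolve_left hA2
  have hB3 : E3 B y := (eB.resolve_left hB1).resolve_left hB2
  exact (hA3.2.2 B hB (kB.2.2 hB3)).symm

theorem cf_tele (q : ℚ) (m t : ℕ) :
    (∏ i ∈ Finset.range t, (q ^ (m - 1 - i) - 1)) * (q ^ m - 1) =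
      (∏ i ∈ Finset.range t, (q ^ (m - i) - 1)) * (q ^ (m - t) - 1) := by
  rw [← Finset.prod_range_succ (fun i => q ^ (m - i) - 1), Finset.prod_range_succ']
  congr 1
  apply Finset.prod_congr rfl
  intro i _
  rw [show m - 1 - i = m - (i + 1) by omega]

theorem cf_li (q : ℚ) (m t : ℕ) (h : t ≤ m) :
    ∏ i ∈ Finset.range t, (q ^ m - q ^ i) =
      (∏ i ∈ Finset.range t, q ^ i) * ∏ i ∈ Finset.range t, (q ^ (m - i) - 1) := by
  rw [← Finset.prod_mul_distrib]
  apply Finset.prod_congr rfl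
  intro i hi
  rw [Finset.mem_range] at hi
  rw [mul_sub, ← pow_add, show i + (m - i) = m by omega, mul_one]

theorem cf_num (q n t : ℕ) (hq : 2 ≤ q) (ht : 1 ≤ t) (hn : 2 * t + 1 ≤ n) :
    GaussQ q (n - 1) t / GaussQ q (2 * t - 1) t *
      ((∏ i ∈ Finset.range (t + 1), ((q : ℚ) ^ (2 * t) - (q : ℚ) ^ i)) +
       (q : ℚ) ^ t / ((q : ℚ) ^ t + 1) *
        (∏ i ∈ Finset.range t, ((q : ℚ) ^ (2 * t) - (q : ℚ) ^ i)) *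
        ((q : ℚ) ^ n - (q : ℚ) ^ (2 * t))) =
      ∏ i ∈ Finset.range (t + 1), ((q : ℚ) ^ n - (q : ℚ) ^ i) := by
  have hq' : (2 : ℚ) ≤ q := by exact_mod_cast hq
  have hq1 : (1 : ℚ) < q := by linarith
  have hpos : ∀ k : ℕ, k ≠ 0 → (q : ℚ) ^ k - 1 ≠ 0 := fun k hk => by
    have := one_lt_pow₀ hq1 hk
    linarith
  have hG : GaussQ q (n - 1) t / GaussQ q (2 * t - 1) t =
      (∏ i ∈ Finset.range t, ((q : ℚ) ^ (n - 1 - i) - 1)) /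
      (∏ i ∈ Finset.range t, ((q : ℚ) ^ (2 * t - 1 - i) - 1)) := by
    unfold GaussQ
    rw [Finset.prod_div_distrib, Finset.prod_div_distrib, div_div_div_cancel_right₀]
    rw [Finset.prod_ne_zero_iff]
    intro i hi
    rw [Finset.mem_range] at hi
    exact hpos _ (by omega)
  have hD : (∏ i ∈ Finset.range t, ((q : ℚ) ^ (2 * t - 1 - i) - 1)) ≠ 0 := by
    rw [Finset.prod_ne_zero_iff]
    intro i hi
    rw [Finset.mem_range] at hi
    exact hpos _ (by omega)
  have t1 := cf_tele q n t
  have t2 := cf_tele q (2 * t) t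
  rw [show 2 * t - t = t by omega] at t2
  rw [hG, Finset.prod_range_succ, Finset.prod_range_succ, cf_li q n t (by omega),
    cf_li q (2 * t) t (by omega)]
  have hnt : (q : ℚ) ^ n = (q : ℚ) ^ t * (q : ℚ) ^ (n - t) := by
    rw [← pow_add]; congr 1; omega
  have h2t : (q : ℚ) ^ (2 * t) = (q : ℚ) ^ t * (q : ℚ) ^ t := by
    rw [← pow_add]; congr 1; omega
  have hqt1 := hpos t (by omega)
  have hqt2 : (q : ℚ) ^ t + 1 ≠ 0 := by positivity
  generalize (∏ i ∈ Finset.range t, ((q : ℚ) ^ (n - 1 - i) - 1)) = N1 at *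
  generalize (∏ i ∈ Finset.range t, ((q : ℚ) ^ (2 * t - 1 - i) - 1)) = D1 at *
  generalize (∏ i ∈ Finset.range t, ((q : ℚ) ^ (n - i) - 1)) = En at *
  generalize (∏ i ∈ Finset.range t, ((q : ℚ) ^ (2 * t - i) - 1)) = E at *
  generalize (∏ i ∈ Finset.range t, (q : ℚ) ^ i) = Q at *
  rw [h2t] at t2 ⊢
  rw [hnt] at t1 ⊢
  generalize (q : ℚ) ^ t = a at *
  generalize (q : ℚ) ^ (n - t) = b at *
  have t3 : E = D1 * (a + 1) := by
    apply mul_right_cancel₀ hqt1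
    rw [← t2]; ring
  subst t3
  field_simp
  linear_combination (Q * a) * t1
/-- The per-member inequality. -/
theorem cf_local (q : ℚ) (n s : ℕ) (hq : 2 ≤ q) (hn : 2 * (s + 1) + 1 ≤ n)
    (ls lt lr cs ct cr : ℚ) (hls : 0 < ls)
    (hlr : lr = ls * ((q ^ (2 * (s + 1)) - q ^ s) * (q ^ (2 * (s + 1)) - q ^ (s + 1))))
    (hcs : 0 ≤ cs)
    (h1 : ls * lr ≤ cs * lr + cr * ls) (h2 : q ^ (s + 1) * lt ≤ (q ^ (s + 1) + 1) * ct) :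
    (lr + q ^ (s + 1) / (q ^ (s + 1) + 1) * lt * (q ^ n - q ^ (2 * (s + 1))) ≤
      cs * (q ^ n - q ^ (2 * (s + 1))) * (q ^ n - q ^ (s + 1)) +
        ct * (q ^ n - q ^ (2 * (s + 1))) + cr) ∧
    (cr < lr → lr + q ^ (s + 1) / (q ^ (s + 1) + 1) * lt * (q ^ n - q ^ (2 * (s + 1))) <
      cs * (q ^ n - q ^ (2 * (s + 1))) * (q ^ n - q ^ (s + 1)) +
        ct * (q ^ n - q ^ (2 * (s + 1))) + cr) := by
  have hq1 : (1 : ℚ) ≤ q := by linarith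
  have e1 : 2 * q ^ (2 * (s + 1)) ≤ q ^ n := by
    calc 2 * q ^ (2 * (s + 1)) ≤ q * q ^ (2 * (s + 1)) := by gcongr
      _ = q ^ (2 * (s + 1) + 1) := by ring
      _ ≤ q ^ n := pow_le_pow_right₀ hq1 hn
  have e2 : 0 < q ^ s := by positivity
  have e3 : q ^ (s + 1) < q ^ (2 * (s + 1)) := pow_lt_pow_right₀ (by linarith) (by omega)
  have e4 : q ^ s ≤ q ^ (s + 1) := pow_le_pow_right₀ hq1 (by omega)
  have e5 : 0 < q ^ (s + 1) := by positivity
  have g1 : q ^ (s + 1) / (q ^ (s + 1) + 1) * lt ≤ ct := by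
    rw [div_mul_eq_mul_div, div_le_iff₀ (by positivity)]
    linarith
  generalize q ^ (2 * (s + 1)) = b at *
  generalize q ^ (s + 1) = a at *
  generalize q ^ s = c at *
  generalize q ^ n = m at *
  have g2 : a / (a + 1) * lt * (m - b) ≤ ct * (m - b) :=
    mul_le_mul_of_nonneg_right g1 (by linarith)
  have g3 : lr ≤ cs * ((b - c) * (b - a)) + cr := by
    have : ls * lr ≤ ls * (cs * ((b - c) * (b - a)) + cr) := by
      rw [hlr] at h1 ⊢
      linarith
    exact le_of_mul_le_mul_left this hls
  have g4 : (b - c) * (b - a) < (m - b) * (m - a) := by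
    apply mul_lt_mul' <;> linarith
  have g5 : 0 < (b - c) * (b - a) := mul_pos (by linarith) (by linarith)
  constructor
  · have := mul_le_mul_of_nonneg_left g4.le hcs
    linarith
  · intro h
    have hcs' : 0 < cs := by
      rcases hcs.lt_or_eq with h' | h'
      · exact h'
      · rw [← h'] at g3
        linarith
    have := mul_lt_mul_of_pos_left g4 hcs'
    linarith

theorem cf_cardLI {K W : Type*} [Field K] [Fintype K] [AddCommGroup W] [Module K W]
    [FiniteDimensional K W] (j : ℕ) (hj : j ≤ Module.finrank K W) :
    (Nat.card {x : Fin j → W // LinearIndependent K x} : ℚ) =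
      ∏ i ∈ Finset.range j,
        ((Fintype.card K : ℚ) ^ Module.finrank K W - (Fintype.card K : ℚ) ^ i) := by
  have : Finite W := Module.finite_of_finite K
  rw [card_linearIndependent hj, Nat.cast_prod, Finset.prod_range]
  apply Finset.prod_congr rfl
  intro i _
  rw [Nat.cast_sub, Nat.cast_pow, Nat.cast_pow]
  exact Nat.pow_le_pow_right Fintype.card_pos (by omega)

theorem cf_own_compl {K V : Type*} [Field K] [AddCommGroup V] [Module K V]
    [FiniteDimensional K V] (F : Set (Submodule K V)) (d : ℕ)
    (hdim : ∀ A ∈ F, Module.finrank K A = d) (hcf : IsCoverFree F)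
    (A : Submodule K V) (hA : A ∈ F) (X Y : Submodule K A) (hXY : IsCompl X Y) :
    CFOwn F A (X.map A.subtype) ∨ CFOwn F A (Y.map A.subtype) := by
  by_contra hcon
  rw [not_or] at hcon
  obtain ⟨hX, hY⟩ := hcon
  have hle : ∀ Z : Submodule K A, Z.map A.subtype ≤ A := fun Z => Submodule.map_subtype_le A Z
  have hsup : A ≤ X.map A.subtype ⊔ Y.map A.subtype := by
    rw [← Submodule.map_sup, hXY.sup_eq_top, Submodule.map_top, Submodule.range_subtype]
  have get : ∀ Z : Submodule K A, ¬ CFOwn F A (Z.map A.subtype) →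
      ∃ B ∈ F, Z.map A.subtype ≤ B ∧ A ≠ B := by
    intro Z hZ
    by_contra hc
    apply hZ
    refine ⟨hle Z, fun B hB hZB => ?_⟩
    by_contra hne
    exact hc ⟨B, hB, hZB, fun h => hne h.symm⟩
  obtain ⟨B, hB, hXB, hAB⟩ := get X hX
  obtain ⟨C, hC, hYC, hAC⟩ := get Y hY
  by_cases hBC : B = C
  · subst hBC
    apply hAB
    exact Submodule.eq_of_le_of_finrank_eq (hsup.trans (sup_le hXB hYC))
      ((hdim A hA).trans (hdim B hB).symm)
  · exact hcf ⟨A, B, C, hA, hB, hC, hAB, hAC, hBC,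
      hsup.trans (sup_le_sup (le_inf (hle X) hXB) (le_inf (hle Y) hYC))⟩

theorem stmt16 (q n t : ℕ) (K : Type*) [Field K] [Fintype K] (hK : Fintype.card K = q)
    (V : Type*) [AddCommGroup V] [Module K V] [FiniteDimensional K V]
    (hV : Module.finrank K V = n) (ht : 1 ≤ t) (hn : 2 * t + 1 ≤ n)
    (F : Set (Submodule K V)) (hdim : ∀ A ∈ F, Module.finrank K A = 2 * t)
    (hcf : IsCoverFree F)
    (hcard : (F.ncard : ℚ) = GaussQ q (n - 1) t / GaussQ q (2 * t - 1) t) :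
    ∀ F₁ ∈ F, ∀ F₂ ∈ F, F₁ ≠ F₂ → Module.finrank K ↥(F₁ ⊓ F₂) ≤ t := by
  classical
  intro F₁ hF₁ F₂ hF₂ hne
  by_contra hcon
  rw [not_le] at hcon
  have hfinV : Finite V := Module.finite_of_finite K
  have hfin : F.Finite := Set.toFinite F
  obtain ⟨s, rfl⟩ : ∃ s, t = s + 1 := ⟨t - 1, by omega⟩
  have hq : 2 ≤ q := by rw [← hK]; exact Fintype.one_lt_card
  have hq' : (2 : ℚ) ≤ q := by exact_mod_cast hq
  let G : Finset (Submodule K V) := hfin.toFinset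
  have hG : (G : Set (Submodule K V)) = F := hfin.coe_toFinset
  have hGm : ∀ A, A ∈ G ↔ A ∈ F := fun A => hfin.mem_toFinset
  have hGc : F.ncard = G.card := Set.ncard_eq_toFinset_card F hfin
  let c : Submodule K V → ℕ → ℕ := fun A j => Nat.card {x : Fin j → V // LinearIndependent K x ∧
          CFOwn F A (Submodule.span K (Set.range x))}
  let l : ℕ → ℚ := fun j => ∏ i ∈ Finset.range j, ((q : ℚ) ^ (2 * (s + 1)) - (q : ℚ) ^ i)
  have hl : ∀ A ∈ F, ∀ j, j ≤ 2 * (s + 1) →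
      (Nat.card {x : Fin j → A // LinearIndependent K x} : ℚ) = l j := by
    intro A hA j hj
    rw [cf_cardLI j (by rw [hdim A hA]; exact hj), hdim A hA, hK]
  have hlpos : 0 < l s := by
    apply Finset.prod_pos
    intro i hi
    rw [Finset.mem_range] at hi
    exact sub_pos.2 (pow_lt_pow_right₀ (by linarith) (by omega))
  have hlr : l (s + 2) = l s * (((q : ℚ) ^ (2 * (s + 1)) - (q : ℚ) ^ s) *
      ((q : ℚ) ^ (2 * (s + 1)) - (q : ℚ) ^ (s + 1))) := by
    simp only [l]
    rw [Finset.prod_range_succ, Finset.prod_range_succ, mul_assoc]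
  have hloc := fun A (hA : A ∈ F) => cf_local (q : ℚ) n s hq' hn (l s) (l (s + 1)) (l (s + 2))
    (c A s) (c A (s + 1)) (c A (s + 2)) hlpos hlr (Nat.cast_nonneg _)
    (by
      have h := cf_pair (K := K) (W := A) (fun X => CFOwn F A (X.map A.subtype))
        (cf_own_compl F _ hdim hcf A hA) s (s + 2) (by rw [hdim A hA]; ring)
      rw [← cf_restrict, ← cf_restrict] at h
      have h' := (Nat.cast_le (α := ℚ)).2 h
      push_cast at h'
      rw [hl A hA s (by omega), hl A hA (s + 2) (by omega)] at h'
      exact h')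
    (by
      have h := cf_ekr (K := K) (W := A) (fun X => CFOwn F A (X.map A.subtype))
        (cf_own_compl F _ hdim hcf A hA) (s + 1) (by omega) (hdim A hA)
      rw [← cf_restrict, hK] at h
      have h' := (Nat.cast_le (α := ℚ)).2 h
      push_cast at h'
      rw [hl A hA (s + 1) (by omega)] at h'
      exact h')
  have hstrict : (c F₁ (s + 2) : ℚ) < l (s + 2) := by
    rw [← hl F₁ hF₁ (s + 2) (by omega)]
    have e : c F₁ (s + 2) = _ := cf_restrict F F₁ (s + 2)
    rw [e, Nat.cast_lt]
    obtain ⟨x, hx⟩ := exists_linearIndependent_of_le_finrank (R := K) (M := ↥(F₁ ⊓ F₂))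
      (n := s + 2) (by omega)
    let y : Fin (s + 2) → F₁ := fun i => ⟨(x i : V), (x i).2.1⟩
    have hy : LinearIndependent K y :=
      hx.map' (Submodule.inclusion (inf_le_left : F₁ ⊓ F₂ ≤ F₁))
        (Submodule.ker_inclusion _ _ _)
    refine Set.ncard_lt_ncard (s := {x : Fin (s + 2) → F₁ | LinearIndependent K x ∧
      CFOwn F F₁ ((Submodule.span K (Set.range x)).map F₁.subtype)})
      (t := {x : Fin (s + 2) → F₁ | LinearIndependent K x}) ?_ (Set.toFinite _)
    refine ⟨fun z hz => hz.1, fun hsub => ?_⟩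
    have hown := (hsub hy).2
    apply hne
    symm
    apply hown.2 F₂ hF₂
    rw [Submodule.map_le_iff_le_comap, Submodule.span_le]
    rintro _ ⟨i, rfl⟩
    exact (x i).2.2
  have hmain := cf_main (K := K) (V := V) G s (2 * (s + 1))
    (fun A hA => hdim A ((hGm A).1 hA))
  rw [hG, hV, hK] at hmain
  have hmain' := (Nat.cast_le (α := ℚ)).2 hmain
  rw [cf_cardLI (s + 2) (by omega), hV, hK] at hmain'
  push_cast at hmain'
  have k1 : q ^ (2 * (s + 1)) ≤ q ^ n := Nat.pow_le_pow_right (by omega) (by omega)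
  have k2 : q ^ (s + 1) ≤ q ^ n := Nat.pow_le_pow_right (by omega) (by omega)
  rw [Nat.cast_sub k1, Nat.cast_sub k2] at hmain'
  push_cast at hmain'
  have hnum := cf_num q n (s + 1) hq ht hn
  rw [← hcard, hGc, ← nsmul_eq_mul, ← Finset.sum_const] at hnum
  have hlt := Finset.sum_lt_sum (s := G) (fun A hA => (hloc A ((hGm A).1 hA)).1)
    ⟨F₁, (hGm F₁).2 hF₁, (hloc F₁ hF₁).2 hstrict⟩
  exact absurd (hlt.trans_le hmain') (by rw [← hnum]; exact lt_irrefl _)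
end

section
/- Let V be an n-dimensional vector space over the finite field 𝔽_q with n ≥ 3, and let F be a cover-free family of 2-dimensional subspaces of V with |F| = [n-1 choose 1]_q = (q^{n-1}-1)/(q-1). Then F = {E ⊕ S : S a 1-dimensional subspace of W} for some 1-dimensional subspace E of V and some (n-1)-dimensional subspace W of V with E ⊕ W = V. -/
theorem exists_core {K V : Type*} [Field K] [AddCommGroup V] [Module K V] [FiniteDimensional K V]
    (F : Set (Submodule K V)) (hdim : ∀ A ∈ F, Module.finrank K A = 2)
    (hcf : IsCoverFree F) (A : Submodule K V) (hA : A ∈ F) :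
    ∃ E : Submodule K V, E ≤ A ∧ Module.finrank K E = 1 ∧ ∀ B ∈ F, B ≠ A → A ⊓ B ≤ E := by
  by_cases h : ∃ B ∈ F, B ≠ A ∧ A ⊓ B ≠ ⊥
  · obtain ⟨B, hB, hBA, hne⟩ := h
    have hA2 := hdim A hA
    have hB2 := hdim B hB
    have h1 : Module.finrank K ↥(A ⊓ B) = 1 := by
      have h0 : Module.finrank K ↥(A ⊓ B) ≠ 0 := by
        rwa [Ne, Submodule.finrank_eq_zero]
      have hle : Module.finrank K ↥(A ⊓ B) ≤ 2 := hA2 ▸ Submodule.finrank_mono inf_le_left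
      have h2 : Module.finrank K ↥(A ⊓ B) ≠ 2 := by
        intro h2
        have e1 : A ⊓ B = A := Submodule.eq_of_le_of_finrank_eq inf_le_left (by omega)
        have e2 : A ⊓ B = B := Submodule.eq_of_le_of_finrank_eq inf_le_right (by omega)
        exact hBA (e2.symm.trans e1)
      omega
    refine ⟨A ⊓ B, inf_le_left, h1, fun C hC hCA => ?_⟩
    by_contra hnot
    have hCB : B ≠ C := by
      rintro rfl
      exact hnot le_rfl
    apply hcf
    refine ⟨A, B, C, hA, hB, hC, hBA.symm, hCA.symm, hCB, ?_⟩
    have hlt : A ⊓ B < (A ⊓ B) ⊔ (A ⊓ C) := by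
      refine lt_of_le_of_ne le_sup_left fun he => hnot ?_
      rw [he]
      exact le_sup_right
    have h2 := Submodule.finrank_lt_finrank_of_lt hlt
    have hle : (A ⊓ B) ⊔ (A ⊓ C) ≤ A := sup_le inf_le_left inf_le_left
    have h3 := Submodule.finrank_mono hle
    exact (Submodule.eq_of_le_of_finrank_eq hle (by omega)).ge
  · push Not at h
    have hne : A ≠ ⊥ := by
      rintro rfl
      have := hdim _ hA
      simp at this
    obtain ⟨v, hv, hv0⟩ := Submodule.exists_mem_ne_zero_of_ne_bot hne
    refine ⟨Submodule.span K {v}, by simpa using hv, finrank_span_singleton hv0, ?_⟩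
    intro B hB hBA
    rw [h B hB hBA]
    exact bot_le

theorem stmt17 (q n : ℕ) (K : Type*) [Field K] [Fintype K] (hK : Fintype.card K = q)
    (V : Type*) [AddCommGroup V] [Module K V] [FiniteDimensional K V]
    (hV : Module.finrank K V = n) (hn : 3 ≤ n)
    (F : Set (Submodule K V)) (hdim : ∀ A ∈ F, Module.finrank K A = 2)
    (hcf : IsCoverFree F)
    (hcard : (F.ncard : ℚ) = ((q : ℚ) ^ (n - 1) - 1) / ((q : ℚ) - 1)) :
    ∃ E W : Submodule K V, Module.finrank K E = 1 ∧ Module.finrank K W = n - 1 ∧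
      E ⊓ W = ⊥ ∧ E ⊔ W = ⊤ ∧
      F = (fun S => E ⊔ S) '' {S : Submodule K V | S ≤ W ∧ Module.finrank K S = 1} := by
  classical
  have hfinV : Finite V := Module.finite_of_finite K
  have : Fintype V := Fintype.ofFinite V
  have hF : F.Finite := Set.toFinite F
  choose! e heA he1 heB using exists_core F hdim hcf
  have hq : 2 ≤ q := by
    rw [← hK]; exact Fintype.one_lt_card
  have hqQ : (2 : ℚ) ≤ q := by exact_mod_cast hq
  have hcount : F.ncard * (q ^ 2 - q) + q = q ^ n := by
    have hle : q ≤ q ^ 2 := by nlinarith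
    have hqn : (q : ℚ) ^ n = q ^ (n - 1) * q := by
      rw [← pow_succ]; congr 1; omega
    have hne : (q : ℚ) - 1 ≠ 0 := by linarith
    have h := (eq_div_iff hne).1 hcard
    have : ((F.ncard * (q ^ 2 - q) + q : ℕ) : ℚ) = ((q ^ n : ℕ) : ℚ) := by
      push_cast [Nat.cast_sub hle]
      rw [hqn]
      linear_combination (q : ℚ) * h
    exact_mod_cast this
  have hFne : F.Nonempty := by
    by_contra hemp
    rw [Set.not_nonempty_iff_eq_empty] at hemp
    rw [hemp, Set.ncard_empty] at hcount
    have : q ^ 1 < q ^ n := Nat.pow_lt_pow_right (by omega) (by omega)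
    simp at this hcount
    omega
  have hcardS : ∀ S : Submodule K V, (Finset.univ.filter (fun v => v ∈ S)).card
      = q ^ Module.finrank K S := by
    intro S
    rw [← hK, ← Module.card_eq_pow_finrank (K := K) (V := S), Fintype.card_subtype]
  let g : Submodule K V → Finset V := fun A =>
    (Finset.univ.filter (fun v => v ∈ A)) \ (Finset.univ.filter (fun v => v ∈ e A))
  have hg : ∀ A v, v ∈ g A ↔ v ∈ A ∧ v ∉ e A := by
    intro A v; simp [g]
  let U : Finset V := hF.toFinset.biUnion g
  have hU : ∀ v, v ∈ U ↔ ∃ A ∈ F, v ∈ A ∧ v ∉ e A := by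
    intro v; simp [U, hg]
  have hUcard : U.card = F.ncard * (q ^ 2 - q) := by
    have h1 : U.card = ∑ A ∈ hF.toFinset, (g A).card := by
      apply Finset.card_biUnion
      intro A hA B hB hAB
      rw [Finset.mem_coe, Set.Finite.mem_toFinset] at hA hB
      change Disjoint (g A) (g B)
      rw [Finset.disjoint_left]
      intro v hv hv'
      rw [hg] at hv hv'
      exact hv.2 (heB A hA B hB hAB.symm ⟨hv.1, hv'.1⟩)
    rw [h1, Finset.sum_const_nat (m := q ^ 2 - q), Set.ncard_eq_toFinset_card F hF]
    intro A hA
    rw [Set.Finite.mem_toFinset] at hA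
    rw [Finset.card_sdiff_of_subset, hcardS, hcardS, hdim A hA, he1 A hA, pow_one]
    intro v hv
    simp only [Finset.mem_filter, Finset.mem_univ, true_and] at hv ⊢
    exact heA A hA hv
  have key : ∀ A ∈ F, ∀ v, v ∈ e A ↔ v ∉ U := by
    intro A hA
    have hsub : Finset.univ.filter (fun v => v ∈ e A) ⊆ Uᶜ := by
      intro v hv
      simp only [Finset.mem_filter, Finset.mem_univ, true_and] at hv
      rw [Finset.mem_compl, hU]
      rintro ⟨B, hB, hvB, hve⟩
      by_cases hAB : A = B
      · subst hAB; exact hve hv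
      · exact hve (heB B hB A hA hAB ⟨hvB, heA A hA hv⟩)
    have heq : Finset.univ.filter (fun v => v ∈ e A) = Uᶜ := by
      apply Finset.eq_of_subset_of_card_le hsub
      rw [Finset.card_compl, hUcard, hcardS, he1 A hA, Module.card_eq_pow_finrank (K := K) (V := V),
        hK, hV, pow_one]
      omega
    intro v
    rw [← Finset.mem_compl, ← heq]
    simp
  obtain ⟨A₀, hA₀⟩ := hFne
  have hE : ∀ A ∈ F, e A = e A₀ := by
    intro A hA
    ext v
    rw [key A hA, key A₀ hA₀]
  obtain ⟨W, hW⟩ := Submodule.exists_isCompl (e A₀)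
  have hE1 := he1 A₀ hA₀
  refine ⟨e A₀, W, hE1, ?_, hW.inf_eq_bot, hW.sup_eq_top, ?_⟩
  · have := Submodule.finrank_add_eq_of_isCompl hW
    omega
  · have hdisj : ∀ S, S ≤ W → Module.finrank K ↥(e A₀ ⊔ S) = 1 + Module.finrank K S := by
      intro S hS
      have h := Submodule.finrank_sup_add_finrank_inf_eq (e A₀) S
      have hb : e A₀ ⊓ S = ⊥ := by
        rw [eq_bot_iff, ← hW.inf_eq_bot]
        exact inf_le_inf_left _ hS
      rw [hb, finrank_bot] at h
      omega
    ext A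
    simp only [Set.mem_image, Set.mem_ofPred_eq]
    constructor
    · intro hA
      have hEA : e A₀ ≤ A := hE A hA ▸ heA A hA
      have hmod : e A₀ ⊔ (W ⊓ A) = A := by
        rw [← sup_inf_assoc_of_le W hEA, hW.sup_eq_top, top_inf_eq]
      refine ⟨W ⊓ A, ⟨inf_le_left, ?_⟩, hmod⟩
      have h := hdisj (W ⊓ A) inf_le_left
      rw [hmod, hdim A hA] at h
      omega
    · rintro ⟨S, ⟨hSW, hS1⟩, rfl⟩
      have hne : S ≠ ⊥ := by
        rintro rfl
        simp at hS1
      obtain ⟨v, hv, hv0⟩ := Submodule.exists_mem_ne_zero_of_ne_bot hne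
      have hvE : v ∉ e A₀ := by
        intro hvE
        have : v ∈ e A₀ ⊓ W := ⟨hvE, hSW hv⟩
        rw [hW.inf_eq_bot] at this
        exact hv0 (by simpa using this)
      have hvU : v ∈ U := by
        by_contra h
        exact hvE ((key A₀ hA₀ v).2 h)
      obtain ⟨A, hA, hvA, -⟩ := (hU v).1 hvU
      have hspan : Submodule.span K {v} = S :=
        Submodule.eq_of_le_of_finrank_eq (by simpa using hv)
          (by rw [finrank_span_singleton hv0, hS1])
      have hle : e A₀ ⊔ S ≤ A := by
        refine sup_le (hE A hA ▸ heA A hA) ?_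
        rw [← hspan]
        simpa using hvA
      have : e A₀ ⊔ S = A := Submodule.eq_of_le_of_finrank_eq hle
        (by rw [hdisj S hSW, hS1, hdim A hA])
      rw [this]
      exact hA
end

section
/- Let V be an n-dimensional vector space over the finite field 𝔽_q with n ≥ 2t+1 and t ≥ 2, and let F be a cover-free family of 2t-dimensional subspaces of V with |F| = [n-1 choose t]_q / [2t-1 choose t]_q. Let Ω be the set of t-dimensional subspaces A of V with |F_A| = 1, and let △(Ω) be its shadow. Then for every B ∈ △(Ω), |F_B| ≤ (q^{n-t}-1)/(q^t-1); moreover, equality holds if and only if there is exactly one t-dimensional subspace T of V with B ≤ T and |F_T| > 1. -/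
/-- `Ω`: the `t`-dimensional subspaces of `V` lying in exactly one member of the family. -/
def OmegaSet {K V : Type*} [Field K] [AddCommGroup V] [Module K V]
    (F : Set (Submodule K V)) (t : ℕ) : Set (Submodule K V) :=
  {A | Module.finrank K A = t ∧ {G ∈ F | A ≤ G}.ncard = 1}

namespace CF

open Module

section prob
variable {Γ : Type*} [Group Γ] [Fintype Γ]

open Classical in
/-- The proportion of elements of a finite group with a given property. -/
noncomputable def pr (P : Γ → Prop) : ℚ :=
  (∑ g : Γ, if P g then (1 : ℚ) else 0) / (Fintype.card Γ : ℚ)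

lemma card_pos' : (0 : ℚ) < (Fintype.card Γ : ℚ) := by
  exact_mod_cast Fintype.card_pos

lemma pr_nonneg (P : Γ → Prop) : 0 ≤ pr P := by
  unfold pr
  apply div_nonneg
  · apply Finset.sum_nonneg
    intro g _
    split_ifs <;> norm_num
  · exact card_pos'.le

lemma pr_congr {P Q : Γ → Prop} (h : ∀ g, P g ↔ Q g) : pr P = pr Q := by
  have : P = Q := funext fun g => propext (h g)
  rw [this]

lemma pr_true : pr (fun _ : Γ => True) = 1 := by
  unfold pr
  simp

lemma pr_mul_left (k : Γ) (P : Γ → Prop) : pr (fun g => P (k * g)) = pr P := by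
  classical
  unfold pr
  congr 1
  exact Fintype.sum_equiv (Equiv.mulLeft k) _ _ (fun g => by by_cases h : P (k * g) <;> simp [h])

lemma pr_mul_right (k : Γ) (P : Γ → Prop) : pr (fun g => P (g * k)) = pr P := by
  classical
  unfold pr
  congr 1
  exact Fintype.sum_equiv (Equiv.mulRight k) _ _ (fun g => by by_cases h : P (g * k) <;> simp [h])

/-- at most one of finitely many events -/
lemma sum_pr_le_one {ι : Type*} (s : Finset ι) (P : ι → Γ → Prop)
    (h : ∀ g, ∀ i ∈ s, ∀ j ∈ s, P i g → P j g → i = j) : ∑ i ∈ s, pr (P i) ≤ 1 := by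
  classical
  unfold pr
  rw [← Finset.sum_div, div_le_one card_pos', Finset.sum_comm]
  calc _ ≤ ∑ g : Γ, (1 : ℚ) := by
        apply Finset.sum_le_sum
        intro g _
        rw [← Finset.sum_filter]
        simp only [Finset.sum_const, nsmul_eq_mul, mul_one]
        have : (s.filter (fun i => P i g)).card ≤ 1 := by
          rw [Finset.card_le_one]
          intro a ha b hb
          simp only [Finset.mem_filter] at ha hb
          exact h g a ha.1 b hb.1 ha.2 hb.2
        exact_mod_cast this
    _ = _ := by simp

/-- if the bound is attained, every `g` satisfies some event -/
lemma exists_of_sum_pr {ι : Type*} (s : Finset ι) (P : ι → Γ → Prop)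
    (h : ∀ g, ∀ i ∈ s, ∀ j ∈ s, P i g → P j g → i = j) (h1 : 1 ≤ ∑ i ∈ s, pr (P i)) (g : Γ) :
    ∃ i ∈ s, P i g := by
  classical
  by_contra hne
  push Not at hne
  revert h1
  unfold pr
  rw [← Finset.sum_div, imp_false, not_le, div_lt_one card_pos', Finset.sum_comm]
  calc _ < ∑ g : Γ, (1 : ℚ) := by
        apply Finset.sum_lt_sum
        · intro g _
          rw [← Finset.sum_filter]
          simp only [Finset.sum_const, nsmul_eq_mul, mul_one]
          have : (s.filter (fun i => P i g)).card ≤ 1 := by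
            rw [Finset.card_le_one]
            intro a ha b hb
            simp only [Finset.mem_filter] at ha hb
            exact h g a ha.1 b hb.1 ha.2 hb.2
          exact_mod_cast this
        · refine ⟨g, Finset.mem_univ _, ?_⟩
          rw [Finset.sum_eq_zero]
          · norm_num
          · intro i hi
            simp [hne i hi]
    _ = _ := by simp

lemma pr_add_of_disj (P Q : Γ → Prop) (h : ∀ g, ¬ (P g ∧ Q g)) :
    pr (fun g => P g ∨ Q g) = pr P + pr Q := by
  classical
  unfold pr
  rw [← add_div, ← Finset.sum_add_distrib]
  congr 1
  apply Finset.sum_congr rfl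
  intro g _
  have := h g
  by_cases h1 : P g <;> by_cases h2 : Q g <;> simp_all

lemma pr_not (P : Γ → Prop) : pr (fun g => ¬ P g) = 1 - pr P := by
  have := pr_add_of_disj P (fun g => ¬ P g) (fun g => by tauto)
  rw [pr_congr (Q := fun _ => True) (fun g => by tauto), pr_true] at this
  linarith

lemma pr_mono {P Q : Γ → Prop} (h : ∀ g, P g → Q g) : pr P ≤ pr Q := by
  classical
  unfold pr
  apply div_le_div_of_nonneg_right _ card_pos'.le
  apply Finset.sum_le_sum
  intro g _
  have := h g
  by_cases h1 : P g <;> by_cases h2 : Q g <;> simp_all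

lemma pr_le_one (P : Γ → Prop) : pr P ≤ 1 := by
  rw [← pr_true (Γ := Γ)]
  exact pr_mono (fun _ _ => trivial)

lemma not_of_pr_zero {P : Γ → Prop} (h : pr P = 0) (g : Γ) : ¬ P g := by
  classical
  intro hg
  unfold pr at h
  rw [div_eq_zero_iff] at h
  rcases h with h | h
  · rw [Finset.sum_eq_zero_iff_of_nonneg] at h
    · have := h g (Finset.mem_univ _)
      simp [hg] at this
    · intro g _
      split_ifs <;> norm_num
  · exact card_pos'.ne' h

lemma of_pr_one {P : Γ → Prop} (h : pr P = 1) (g : Γ) : P g := by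
  have := pr_not P
  rw [h, sub_self] at this
  exact not_not.1 (not_of_pr_zero this g)

end prob

section lin
variable {K : Type*} [Field K]

lemma exists_flag (W : Type*) [AddCommGroup W] [Module K W] [FiniteDimensional K W] :
    ∃ e : ℕ → Submodule K W, Monotone e ∧ ∀ i ≤ finrank K W, finrank K (e i) = i := by
  classical
  let b := Module.finBasis K W
  refine ⟨fun i => Submodule.span K (b '' {j | j.val < i}), ?_, ?_⟩
  · intro i j hij
    apply Submodule.span_mono
    apply Set.image_mono
    intro x hx
    exact lt_of_lt_of_le hx hij
  · intro i hi
    have h1 : (b '' {j | j.val < i}) = (((Finset.univ.filter (fun j : Fin (finrank K W) => j.val < i)).image b : Finset W) : Set W) := by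
      ext x; simp
    show finrank K (Submodule.span K (b '' {j | j.val < i})) = i
    rw [h1, finrank_span_finset_eq_card]
    · rw [Finset.card_image_of_injective _ b.injective]
      rw [Fin.card_filter_val_lt]
      omega
    · rw [← h1]
      exact (b.linearIndependent.linearIndepOn _).id_image

/-- transitivity on subspaces of a given dimension -/
lemma exists_map_eq {W : Type*} [AddCommGroup W] [Module K W] [FiniteDimensional K W]
    (A A' : Submodule K W) (h : finrank K A = finrank K A') :
    ∃ g : W ≃ₗ[K] W, A.map (g : W →ₗ[K] W) = A' := by
  obtain ⟨C, hC⟩ := A.exists_isCompl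
  obtain ⟨C', hC'⟩ := A'.exists_isCompl
  have h1 := Submodule.finrank_add_eq_of_isCompl hC
  have h2 := Submodule.finrank_add_eq_of_isCompl hC'
  have h3 : finrank K C = finrank K C' := by omega
  let f := LinearEquiv.ofFinrankEq A A' h
  let f' := LinearEquiv.ofFinrankEq C C' h3
  let g : W ≃ₗ[K] W := (Submodule.prodEquivOfIsCompl A C hC).symm ≪≫ₗ (f.prodCongr f') ≪≫ₗ
    Submodule.prodEquivOfIsCompl A' C' hC'
  refine ⟨g, ?_⟩
  apply Submodule.eq_of_le_of_finrank_eq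
  · rintro _ ⟨x, hx, rfl⟩
    have : g x = f ⟨x, hx⟩ := by
      have : (Submodule.prodEquivOfIsCompl A C hC).symm x = (⟨x, hx⟩, 0) :=
        Submodule.prodEquivOfIsCompl_symm_apply_left _ _ hC ⟨x, hx⟩
      simp only [g, LinearEquiv.trans_apply]
      rw [this]
      simp
    simp [this]
  · rw [LinearEquiv.finrank_map_eq, h]

/-- extension of automorphisms -/
lemma exists_extend {V : Type*} [AddCommGroup V] [Module K V]
    (G : Submodule K V) (h : G ≃ₗ[K] G) : ∃ g : V ≃ₗ[K] V, ∀ x : G, g x = h x := by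
  obtain ⟨C, hC⟩ := G.exists_isCompl
  let g : V ≃ₗ[K] V := (Submodule.prodEquivOfIsCompl G C hC).symm ≪≫ₗ
    (h.prodCongr (LinearEquiv.refl K C)) ≪≫ₗ Submodule.prodEquivOfIsCompl G C hC
  refine ⟨g, ?_⟩
  intro x
  have := Submodule.prodEquivOfIsCompl_symm_apply_left _ _ hC x
  simp only [g, LinearEquiv.trans_apply]
  rw [this]
  simp

lemma exists_map_eq₂ {V : Type*} [AddCommGroup V] [Module K V] [FiniteDimensional K V]
    (A C A' C' : Submodule K V) (hAC : A ≤ C) (hAC' : A' ≤ C') (h : finrank K A = finrank K A')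
    (h' : finrank K C = finrank K C') :
    ∃ g : V ≃ₗ[K] V, A.map (g : V →ₗ[K] V) = A' ∧ C.map (g : V →ₗ[K] V) = C' := by
  obtain ⟨g, hg⟩ := exists_map_eq C C' h'
  set A₁ := A.map (g : V →ₗ[K] V) with hA₁
  have hA₁C : A₁ ≤ C' := hg ▸ Submodule.map_mono hAC
  have hf : ∀ X : Submodule K V, X ≤ C' → (X.submoduleOf C').map C'.subtype = X := by
    intro X hX
    simp [Submodule.submoduleOf, Submodule.map_comap_subtype, hX]
  have hr : finrank K (A₁.submoduleOf C') = finrank K (A'.submoduleOf C') := by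
    rw [(Submodule.submoduleOfEquivOfLe hA₁C).finrank_eq,
      (Submodule.submoduleOfEquivOfLe hAC').finrank_eq, ← h, hA₁, LinearEquiv.finrank_map_eq]
  obtain ⟨k, hk⟩ := exists_map_eq _ _ hr
  obtain ⟨k', hk'⟩ := exists_extend C' k
  have hcomm : (k' : V →ₗ[K] V) ∘ₗ C'.subtype = C'.subtype ∘ₗ (k : C' →ₗ[K] C') := by
    ext x; simp [hk']
  refine ⟨g ≪≫ₗ k', ?_, ?_⟩
  · have : A.map ((g ≪≫ₗ k' : V ≃ₗ[K] V) : V →ₗ[K] V) = A₁.map (k' : V →ₗ[K] V) := by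
      rw [hA₁, ← Submodule.map_comp]; rfl
    rw [this, ← hf A₁ hA₁C, ← Submodule.map_comp, hcomm, Submodule.map_comp, hk, hf A' hAC']
  · have : C.map ((g ≪≫ₗ k' : V ≃ₗ[K] V) : V →ₗ[K] V) = C'.map (k' : V →ₗ[K] V) := by
      rw [← hg, ← Submodule.map_comp]; rfl
    rw [this]
    apply Submodule.eq_of_le_of_finrank_eq
    · rintro _ ⟨x, hx, rfl⟩
      have := hk' ⟨x, hx⟩
      simp only [LinearEquiv.coe_coe]
      simp only at this
      rw [this]
      simp
    · rw [LinearEquiv.finrank_map_eq]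

/-- existence of spreads -/
lemma exists_spread [Fintype K] (t : ℕ) (ht : 0 < t) (W : Type*) [AddCommGroup W] [Module K W]
    [FiniteDimensional K W] (hW : finrank K W = 2 * t) :
    ∃ (ι : Type) (_ : Fintype ι) (σ : ι → Submodule K W), Fintype.card ι = Fintype.card K ^ t + 1 ∧
      (∀ i, finrank K (σ i) = t) ∧ ∀ i j, i ≠ j → σ i ⊔ σ j = ⊤ := by
  classical
  obtain ⟨p, hp⟩ := CharP.exists K
  have := hp
  have : Fact p.Prime := ⟨CharP.char_is_prime K p⟩
  have : NeZero t := ⟨ht.ne'⟩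
  let L := FiniteField.Extension K p t
  have hL : finrank K L = t := FiniteField.finrank_extension K p t
  have hc : Nat.card L = Nat.card K ^ t := FiniteField.natCard_extension K p t
  have : Finite L := Module.finite_of_finite K
  let : Fintype L := Fintype.ofFinite L
  have hLL : finrank K (L × L) = finrank K W := by rw [Module.finrank_prod, hL, hW]; ring
  let φ := LinearEquiv.ofFinrankEq (L × L) W hLL
  let s : Option L → Submodule K (L × L) := fun o => match o with
    | none => LinearMap.range (LinearMap.inr K L L)
    | some a => LinearMap.range (LinearMap.prod (LinearMap.id) (LinearMap.mulLeft K a))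
  have hs : ∀ i, finrank K (s i) = t := by
    intro i
    cases i with
    | none =>
      rw [LinearMap.finrank_range_of_inj LinearMap.inr_injective, hL]
    | some a =>
      rw [LinearMap.finrank_range_of_inj, hL]
      intro x y hxy
      simpa using congrArg Prod.fst hxy
  have hd : ∀ i j, i ≠ j → s i ⊓ s j = ⊥ := by
    intro i j hij
    rw [eq_bot_iff]
    rintro ⟨x, y⟩ ⟨h1, h2⟩
    simp only [Submodule.mem_bot]
    cases i with
    | none =>
      cases j with
      | none => exact absurd rfl hij
      | some b =>
        obtain ⟨u, hu⟩ := h1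
        obtain ⟨v, hv⟩ := h2
        simp at hu hv
        obtain ⟨rfl, rfl⟩ := hu
        obtain ⟨rfl, rfl⟩ := hv
        simp
    | some a =>
      cases j with
      | none =>
        obtain ⟨u, hu⟩ := h2
        obtain ⟨v, hv⟩ := h1
        simp at hu hv
        obtain ⟨rfl, rfl⟩ := hu
        obtain ⟨rfl, rfl⟩ := hv
        simp
      | some b =>
        obtain ⟨u, hu⟩ := h1
        obtain ⟨v, hv⟩ := h2
        simp at hu hv
        obtain ⟨rfl, rfl⟩ := hu
        obtain ⟨rfl, hv⟩ := hv
        have hab : b - a ≠ 0 := by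
          intro h
          apply hij
          rw [sub_eq_zero.1 h]
        have : (b - a) * v = 0 := by rw [sub_mul, hv, sub_self]
        rcases mul_eq_zero.1 this with h | h
        · exact absurd h hab
        · simp [h]
  refine ⟨Option L, inferInstance, fun i => (s i).map (φ : L × L →ₗ[K] W), ?_, ?_, ?_⟩
  · rw [Fintype.card_option, ← Nat.card_eq_fintype_card, hc, Nat.card_eq_fintype_card]
  · intro i
    rw [LinearEquiv.finrank_map_eq, hs]
  · intro i j hij
    show (s i).map (φ : L × L →ₗ[K] W) ⊔ (s j).map (φ : L × L →ₗ[K] W) = ⊤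
    rw [← Submodule.map_sup]
    have : s i ⊔ s j = ⊤ := by
      apply Submodule.eq_top_of_finrank_eq
      have := Submodule.finrank_sup_add_finrank_inf_eq (s i) (s j)
      rw [hd i j hij, hs, hs, finrank_bot] at this
      rw [hLL, hW]; omega
    rw [this, Submodule.map_top, LinearEquiv.range]

end lin

section gl
variable {K : Type*} [Field K]

noncomputable instance glFintype {W : Type*} [AddCommGroup W] [Module K W] [Finite W] :
    Fintype (W ≃ₗ[K] W) :=
  have : Finite (W ≃ₗ[K] W) := Finite.of_injective (fun g => (g : W → W)) DFunLike.coe_injective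
  Fintype.ofFinite _

/-- image of a subspace under an automorphism -/
abbrev mv {W : Type*} [AddCommGroup W] [Module K W] (g : W ≃ₗ[K] W) (E : Submodule K W) :
    Submodule K W := E.map (g : W →ₗ[K] W)

lemma mv_mul {W : Type*} [AddCommGroup W] [Module K W] (g k : W ≃ₗ[K] W) (E : Submodule K W) :
    mv (g * k) E = mv g (mv k E) := by
  unfold mv
  rw [← Submodule.map_comp]; rfl

lemma mem_mv {W : Type*} [AddCommGroup W] [Module K W] (g : W ≃ₗ[K] W) (E : Submodule K W)
    (x : W) (hx : x ∈ E) : g x ∈ mv g E := ⟨x, hx, rfl⟩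

lemma pr_map_congr {W : Type*} [AddCommGroup W] [Module K W] [FiniteDimensional K W] [Finite W]
    (P : Submodule K W → Prop) (E E' : Submodule K W) (h : finrank K E = finrank K E') :
    pr (fun g : W ≃ₗ[K] W => P (mv g E)) = pr (fun g : W ≃ₗ[K] W => P (mv g E')) := by
  obtain ⟨k, hk⟩ := exists_map_eq E E' h
  have := pr_mul_right k (fun g : W ≃ₗ[K] W => P (mv g E))
  rw [← this]
  apply pr_congr
  intro g
  rw [mv_mul]
  unfold mv
  rw [hk]

/-- a chosen flag -/
noncomputable def flg (K : Type*) [Field K] (W : Type*) [AddCommGroup W] [Module K W]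
    [FiniteDimensional K W] : ℕ → Submodule K W := (exists_flag W).choose

lemma flg_mono (K : Type*) [Field K] (W : Type*) [AddCommGroup W] [Module K W]
    [FiniteDimensional K W] : Monotone (flg K W) := (exists_flag W).choose_spec.1

lemma flg_rank (K : Type*) [Field K] (W : Type*) [AddCommGroup W] [Module K W]
    [FiniteDimensional K W] (i : ℕ) (hi : i ≤ finrank K W) : finrank K (flg K W i) = i :=
  (exists_flag W).choose_spec.2 i hi

/-- proportion of `i`-dimensional subspaces with property `P` -/
noncomputable def pw {W : Type*} [AddCommGroup W] [Module K W] [FiniteDimensional K W] [Finite W]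
    (P : Submodule K W → Prop) (i : ℕ) : ℚ := pr (fun g : W ≃ₗ[K] W => P (mv g (flg K W i)))

lemma pr_eq_pw {W : Type*} [AddCommGroup W] [Module K W] [FiniteDimensional K W] [Finite W]
    (P : Submodule K W → Prop) (E : Submodule K W) (i : ℕ) (h : finrank K E = i) :
    pr (fun g : W ≃ₗ[K] W => P (mv g E)) = pw P i := by
  apply pr_map_congr
  rw [h, flg_rank]
  rw [← h]
  exact Submodule.finrank_le E

lemma pw_zero {W : Type*} [AddCommGroup W] [Module K W] [FiniteDimensional K W] [Finite W]
    (P : Submodule K W → Prop) (E : Submodule K W) (i : ℕ) (h : finrank K E = i)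
    (h0 : pw P i = 0) : ¬ P E := by
  rw [← pr_eq_pw P E i h] at h0
  have := not_of_pr_zero h0 1
  have h1 : mv (1 : W ≃ₗ[K] W) E = E := Submodule.map_id E
  rwa [h1] at this

lemma pw_one {W : Type*} [AddCommGroup W] [Module K W] [FiniteDimensional K W] [Finite W]
    (P : Submodule K W → Prop) (E : Submodule K W) (i : ℕ) (h : finrank K E = i)
    (h0 : pw P i = 1) : P E := by
  rw [← pr_eq_pw P E i h] at h0
  have := of_pr_one h0 1
  have h1 : mv (1 : W ≃ₗ[K] W) E = E := Submodule.map_id E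
  rwa [h1] at this

lemma mv_sup_top {W : Type*} [AddCommGroup W] [Module K W] (g : W ≃ₗ[K] W) (A C : Submodule K W)
    (h : A ⊔ C = ⊤) : mv g A ⊔ mv g C = ⊤ := by
  unfold mv
  rw [← Submodule.map_sup, h, Submodule.map_top, LinearEquiv.range]

lemma pw_compl {W : Type*} [AddCommGroup W] [Module K W] [FiniteDimensional K W] [Finite W]
    (P : Submodule K W → Prop) (hP : ∀ A C, A ⊔ C = ⊤ → P A ∨ P C) (i j : ℕ)
    (hij : i + j = finrank K W) : 1 ≤ pw P i + pw P j := by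
  obtain ⟨C, hC⟩ := (flg K W i).exists_isCompl
  have h1 := Submodule.finrank_add_eq_of_isCompl hC
  rw [flg_rank K W i (by omega)] at h1
  rw [← pr_eq_pw P (flg K W i) i (flg_rank K W i (by omega)), ← pr_eq_pw P C j (by omega)]
  have h2 : pr (fun g : W ≃ₗ[K] W => ¬ P (mv g (flg K W i))) ≤ pr (fun g : W ≃ₗ[K] W => P (mv g C)) := by
    apply pr_mono
    intro g hg
    rcases hP _ _ (mv_sup_top g _ _ hC.sup_eq_top) with h | h
    · exact absurd h hg
    · exact h
  rw [pr_not] at h2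
  linarith

lemma pw_spread [Fintype K] {W : Type*} [AddCommGroup W] [Module K W] [FiniteDimensional K W]
    [Finite W] (t : ℕ) (ht : 0 < t) (hW : finrank K W = 2 * t)
    (P : Submodule K W → Prop) (hP : ∀ A C, A ⊔ C = ⊤ → P A ∨ P C) :
    ((Fintype.card K : ℚ) ^ t + 1) * (1 - pw P t) ≤ 1 := by
  obtain ⟨ι, _, σ, h1, h2, h3⟩ := exists_spread t ht W hW
  have := sum_pr_le_one (Finset.univ : Finset ι) (fun i (g : W ≃ₗ[K] W) => ¬ P (mv g (σ i))) (by
    intro g i _ j _ hi hj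
    by_contra hij
    rcases hP _ _ (mv_sup_top g _ _ (h3 i j hij)) with h | h
    · exact hi h
    · exact hj h)
  simp only [pr_not, pr_eq_pw P _ t (h2 _)] at this
  rw [Finset.sum_const, Finset.card_univ, h1, nsmul_eq_mul] at this
  push_cast at this
  exact this

/-- the probability that a random `i`-space is contained in a given `d`-space -/
def aa (q n d i : ℕ) : ℚ := ∏ l ∈ Finset.range i, ((q : ℚ) ^ d - (q : ℚ) ^ l) / ((q : ℚ) ^ n - (q : ℚ) ^ l)

lemma card_filter_mem [Fintype K] {V : Type*} [AddCommGroup V] [Module K V]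
    [FiniteDimensional K V] [Fintype V] (U : Submodule K V) [DecidablePred (· ∈ U)] :
    ((Finset.univ.filter (fun v : V => v ∈ U)).card : ℚ) = (Fintype.card K : ℚ) ^ finrank K U := by
  classical
  have := Module.card_eq_pow_finrank (K := K) (V := U)
  rw [← Fintype.card_subtype]
  exact_mod_cast this

lemma card_filter_diff [Fintype K] {V : Type*} [AddCommGroup V] [Module K V]
    [FiniteDimensional K V] [Fintype V] (U G : Submodule K V) (hUG : U ≤ G)
    [DecidablePred (fun v : V => v ∉ U ∧ v ∈ G)] :
    ((Finset.univ.filter (fun v : V => v ∉ U ∧ v ∈ G)).card : ℚ) =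
      (Fintype.card K : ℚ) ^ finrank K G - (Fintype.card K : ℚ) ^ finrank K U := by
  classical
  rw [← card_filter_mem G, ← card_filter_mem U]
  have h : (Finset.univ.filter (fun v : V => v ∈ G)) =
    (Finset.univ.filter (fun v : V => v ∉ U ∧ v ∈ G)) ∪ (Finset.univ.filter (fun v : V => v ∈ U)) := by
    ext v
    simp only [Finset.mem_filter, Finset.mem_univ, true_and, Finset.mem_union]
    have : v ∈ U → v ∈ G := fun h => hUG h
    tauto
  rw [h, Finset.card_union_of_disjoint]
  · push_cast; ring
  · rw [Finset.disjoint_filter]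
    tauto

lemma finrank_sup_span {V : Type*} [AddCommGroup V] [Module K V]
    [FiniteDimensional K V] (U : Submodule K V) (v : V) (hv : v ∉ U) :
    finrank K (U ⊔ Submodule.span K {v} : Submodule K V) = finrank K U + 1 := by
  have h0 : v ≠ 0 := fun h => hv (h ▸ U.zero_mem)
  have h1 := Submodule.finrank_sup_add_finrank_inf_eq U (Submodule.span K {v})
  have h2 : U ⊓ Submodule.span K {v} = ⊥ := by
    rw [← disjoint_iff, Submodule.disjoint_span_singleton' h0]
    exact hv
  rw [h2, finrank_bot, finrank_span_singleton h0] at h1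
  omega

lemma mv_sup_le {V : Type*} [AddCommGroup V] [Module K V] (g : V ≃ₗ[K] V) (U G : Submodule K V) (v : V) :
    mv g (U ⊔ Submodule.span K {v}) ≤ G ↔ mv g U ≤ G ∧ g v ∈ G := by
  unfold mv
  rw [Submodule.map_sup, sup_le_iff, Submodule.map_span, Submodule.span_le]
  simp

lemma pw_le [Fintype K] {V : Type*} [AddCommGroup V] [Module K V] [FiniteDimensional K V]
    [Finite V] (G : Submodule K V) (i : ℕ) (hi : i ≤ finrank K V) :
    pw (fun A => A ≤ G) i = aa (Fintype.card K) (finrank K V) (finrank K G) i := by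
  classical
  let _ : Fintype V := Fintype.ofFinite V
  induction i with
  | zero =>
    have h : flg K V 0 = ⊥ := by
      rw [← Submodule.finrank_eq_zero (R := K), flg_rank K V 0 (by omega)]
    unfold pw aa
    rw [pr_congr (Q := fun _ => True)]
    · rw [pr_true]; simp
    · intro g
      simp [h, mv]
  | succ i ih =>
    have ih := ih (by omega)
    set U := flg K V i with hU
    have hUr : finrank K U = i := flg_rank K V i (by omega)
    have hq : (1 : ℚ) < (Fintype.card K : ℚ) := by exact_mod_cast Fintype.one_lt_card
    have hpos : (0 : ℚ) < (Fintype.card K : ℚ) ^ (finrank K V) - (Fintype.card K : ℚ) ^ i :=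
      sub_pos.2 (pow_lt_pow_right₀ hq (by omega))
    -- double count
    have key : ∑ v ∈ Finset.univ.filter (fun v : V => v ∉ U),
        pr (fun g : V ≃ₗ[K] V => mv g (U ⊔ Submodule.span K {v}) ≤ G)
        = pw (fun A => A ≤ G) i * ((Fintype.card K : ℚ) ^ (finrank K G) - (Fintype.card K : ℚ) ^ i) := by
      unfold pw pr
      rw [← Finset.sum_div, Finset.sum_comm, div_mul_eq_mul_div, Finset.sum_mul]
      congr 1
      apply Finset.sum_congr rfl
      intro g _
      by_cases hg : mv g U ≤ G
      · rw [if_pos hg, one_mul]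
        have h1 : U ≤ G.comap (g : V →ₗ[K] V) := Submodule.map_le_iff_le_comap.1 hg
        have h2 : finrank K (G.comap (g : V →ₗ[K] V)) = finrank K G := by
          have : G.comap (g : V →ₗ[K] V) = G.map (g.symm : V →ₗ[K] V) :=
            (Submodule.map_equiv_eq_comap_symm g.symm G).symm
          rw [this, LinearEquiv.finrank_map_eq]
        have h3 := card_filter_diff U (G.comap (g : V →ₗ[K] V)) h1
        rw [h2, hUr] at h3
        rw [← h3, Finset.sum_ite, Finset.sum_const_zero, add_zero, Finset.sum_const, nsmul_eq_mul, mul_one,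
          Finset.filter_filter]
        congr 2
        ext v
        simp only [Finset.mem_filter, mv_sup_le, hg, true_and, Submodule.mem_comap]
        simp
      · rw [if_neg hg, zero_mul]
        apply Finset.sum_eq_zero
        intro v _
        rw [if_neg]
        show ¬ (mv g (U ⊔ Submodule.span K {v}) ≤ G)
        rw [mv_sup_le]
        tauto
    have key2 : ∑ v ∈ Finset.univ.filter (fun v : V => v ∉ U),
        pr (fun g : V ≃ₗ[K] V => mv g (U ⊔ Submodule.span K {v}) ≤ G)
        = ((Fintype.card K : ℚ) ^ (finrank K V) - (Fintype.card K : ℚ) ^ i) * pw (fun A => A ≤ G) (i + 1) := by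
      rw [Finset.sum_congr rfl (g := fun _ => pw (fun A => A ≤ G) (i + 1))]
      · rw [Finset.sum_const, nsmul_eq_mul]
        congr 1
        have h3 := card_filter_diff U (⊤ : Submodule K V) le_top
        rw [finrank_top, hUr] at h3
        rw [← h3]
        congr 2
        ext v; simp
      · intro v hv
        apply pr_eq_pw (fun A => A ≤ G)
        rw [finrank_sup_span, hUr]
        simpa using hv
    rw [key, ih] at key2
    unfold aa at key2 ⊢
    rw [Finset.prod_range_succ, mul_div_assoc', eq_div_iff hpos.ne']
    linarith

end gl

section cond
variable {K : Type*} [Field K]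

lemma pr_cond {V : Type*} [AddCommGroup V] [Module K V] [FiniteDimensional K V] [Finite V]
    (G : Submodule K V) (Q : Submodule K V → Prop) (E E' : Submodule K V) (hE : E ≤ E') (i : ℕ)
    (hi : finrank K E = i) :
    pr (fun g : V ≃ₗ[K] V => mv g E ≤ G ∧ ¬ mv g E' ≤ G ∧ Q (mv g E)) =
      (pr (fun g : V ≃ₗ[K] V => mv g E ≤ G) - pr (fun g : V ≃ₗ[K] V => mv g E' ≤ G)) *
        pw (fun A : Submodule K G => Q (A.map G.subtype)) i := by
  classical
  have h1 : pr (fun g : V ≃ₗ[K] V => mv g E ≤ G) - pr (fun g : V ≃ₗ[K] V => mv g E' ≤ G) =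
      pr (fun g : V ≃ₗ[K] V => mv g E ≤ G ∧ ¬ mv g E' ≤ G) := by
    rw [sub_eq_iff_eq_add, ← pr_add_of_disj]
    · apply pr_congr
      intro g
      have : mv g E' ≤ G → mv g E ≤ G := fun h => (Submodule.map_mono hE).trans h
      tauto
    · intro g; tauto
  rw [h1]
  -- invariance under the stabiliser
  have h2 : ∀ h : G ≃ₗ[K] G, pr (fun g : V ≃ₗ[K] V => mv g E ≤ G ∧ ¬ mv g E' ≤ G ∧ Q (mv g E)) =
      pr (fun g : V ≃ₗ[K] V => (mv g E ≤ G ∧ ¬ mv g E' ≤ G) ∧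
        Q ((mv h ((mv g E).submoduleOf G)).map G.subtype)) := by
    intro h
    obtain ⟨k, hk⟩ := exists_extend G h
    have hcomm : (k : V →ₗ[K] V) ∘ₗ G.subtype = G.subtype ∘ₗ (h : G →ₗ[K] G) := by
      ext x; simp [hk]
    have hkG : ∀ X : Submodule K V, mv k X ≤ G ↔ X ≤ G := by
      have hG : mv k G = G := by
        apply Submodule.eq_of_le_of_finrank_eq
        · rintro _ ⟨x, hx, rfl⟩
          have := hk ⟨x, hx⟩
          simp only [LinearEquiv.coe_coe]
          simp only at this
          rw [this]
          simp
        · rw [LinearEquiv.finrank_map_eq]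
      intro X
      constructor
      · intro hX
        rw [← hG] at hX
        exact (Submodule.map_le_map_iff_of_injective k.injective _ _).1 hX
      · intro hX
        rw [← hG]
        exact Submodule.map_mono hX
    rw [← pr_mul_left k]
    apply pr_congr
    intro g
    rw [mv_mul, mv_mul, hkG, hkG, and_assoc]
    apply and_congr_right
    intro hg
    apply and_congr_right
    intro _
    have : (mv h ((mv g E).submoduleOf G)).map G.subtype = mv k (mv g E) := by
      unfold mv
      rw [← Submodule.map_comp, ← hcomm, Submodule.map_comp]
      congr 1
      simpa [Submodule.submoduleOf, Submodule.map_comap_subtype] using hg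
    rw [this]
  have h3 : (Fintype.card (G ≃ₗ[K] G) : ℚ) *
      pr (fun g : V ≃ₗ[K] V => mv g E ≤ G ∧ ¬ mv g E' ≤ G ∧ Q (mv g E)) =
      ∑ h : G ≃ₗ[K] G, pr (fun g : V ≃ₗ[K] V => (mv g E ≤ G ∧ ¬ mv g E' ≤ G) ∧
        Q ((mv h ((mv g E).submoduleOf G)).map G.subtype)) := by
    rw [← Finset.sum_congr rfl (fun h _ => h2 h), Finset.sum_const, nsmul_eq_mul, Finset.card_univ]
  have hc : (0 : ℚ) < (Fintype.card (G ≃ₗ[K] G) : ℚ) := card_pos'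
  apply mul_left_cancel₀ hc.ne'
  rw [h3]
  unfold pr
  rw [← Finset.sum_div, Finset.sum_comm, div_mul_eq_mul_div, mul_div_assoc', Finset.sum_mul, Finset.mul_sum]
  congr 1
  apply Finset.sum_congr rfl
  intro g _
  by_cases hg : mv g E ≤ G ∧ ¬ mv g E' ≤ G
  · rw [if_pos hg, one_mul]
    have h4 := pr_eq_pw (fun A : Submodule K G => Q (A.map G.subtype)) ((mv g E).submoduleOf G) i (by
      rw [(Submodule.submoduleOfEquivOfLe hg.1).finrank_eq, LinearEquiv.finrank_map_eq, hi])
    rw [← h4]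
    unfold pr
    rw [mul_div_cancel₀ _ hc.ne']
    apply Finset.sum_congr rfl
    intro h _
    simp [hg]
  · rw [if_neg hg, zero_mul, mul_zero]
    apply Finset.sum_eq_zero
    intro h _
    rw [if_neg]
    tauto

end cond

section num

lemma aa_succ (q n d i : ℕ) : aa q n d (i + 1) =
    aa q n d i * (((q : ℚ) ^ d - (q : ℚ) ^ i) / ((q : ℚ) ^ n - (q : ℚ) ^ i)) := by
  unfold aa; rw [Finset.prod_range_succ]

lemma rr_lt (q n t i : ℕ) (hq : 2 ≤ q) (hn : 2 * t + 1 ≤ n) :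
    ((q : ℚ) ^ (2 * t) - (q : ℚ) ^ i) / ((q : ℚ) ^ n - (q : ℚ) ^ i) < 1 / 2 ∨ 2 * t < i := by
  by_cases hi : 2 * t < i
  · exact Or.inr hi
  left
  push Not at hi
  have hq' : (2 : ℚ) ≤ q := by exact_mod_cast hq
  have h1 : (q : ℚ) ^ (2 * t + 1) ≤ (q : ℚ) ^ n := pow_le_pow_right₀ (by linarith) hn
  have h2 : (q : ℚ) ^ i ≤ (q : ℚ) ^ (2 * t) := pow_le_pow_right₀ (by linarith) hi
  have h3 : (0 : ℚ) < (q : ℚ) ^ i := by positivity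
  rw [pow_succ] at h1
  have h4 : 2 * (q : ℚ) ^ (2 * t) ≤ (q : ℚ) ^ n := by nlinarith
  rw [div_lt_div_iff₀ (by linarith) (by norm_num)]
  linarith

lemma rr_nonneg (q n t i : ℕ) (hq : 2 ≤ q) (hn : 2 * t + 1 ≤ n) (hi : i ≤ 2 * t) :
    0 ≤ ((q : ℚ) ^ (2 * t) - (q : ℚ) ^ i) / ((q : ℚ) ^ n - (q : ℚ) ^ i) := by
  have hq' : (2 : ℚ) ≤ q := by exact_mod_cast hq
  have h1 : (q : ℚ) ^ (2 * t) ≤ (q : ℚ) ^ n := pow_le_pow_right₀ (by linarith) (by omega)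
  have h2 : (q : ℚ) ^ i ≤ (q : ℚ) ^ (2 * t) := pow_le_pow_right₀ (by linarith) hi
  apply div_nonneg <;> linarith

lemma rr_pos (q n t i : ℕ) (hq : 2 ≤ q) (hn : 2 * t + 1 ≤ n) (hi : i < 2 * t) :
    0 < ((q : ℚ) ^ (2 * t) - (q : ℚ) ^ i) / ((q : ℚ) ^ n - (q : ℚ) ^ i) := by
  have hq' : (2 : ℚ) ≤ q := by exact_mod_cast hq
  have h1 : (q : ℚ) ^ (2 * t) ≤ (q : ℚ) ^ n := pow_le_pow_right₀ (by linarith) (by omega)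
  have h2 : (q : ℚ) ^ i < (q : ℚ) ^ (2 * t) := pow_lt_pow_right₀ (by linarith) hi
  apply div_pos <;> linarith

lemma aa_pos (q n t i : ℕ) (hq : 2 ≤ q) (hn : 2 * t + 1 ≤ n) (hi : i ≤ 2 * t) :
    0 < aa q n (2 * t) i := by
  unfold aa
  apply Finset.prod_pos
  intro l hl
  rw [Finset.mem_range] at hl
  exact rr_pos q n t l hq hn (by omega)

lemma aa_last (q n t : ℕ) : aa q n (2 * t) (2 * t + 1) = 0 := by
  rw [aa_succ]; simp

/-- differences -/
def cc (q n t i : ℕ) : ℚ := aa q n (2 * t) i - aa q n (2 * t) (i + 1)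

lemma cc_succ_lt (q n t i : ℕ) (hq : 2 ≤ q) (hn : 2 * t + 1 ≤ n) (hi : i < 2 * t) :
    cc q n t (i + 1) < cc q n t i := by
  unfold cc
  rw [aa_succ q n (2 * t) (i + 1), aa_succ q n (2 * t) i]
  have h1 := aa_pos q n t i hq hn (by omega)
  have h2 := rr_pos q n t i hq hn hi
  have h3 := rr_nonneg q n t (i + 1) hq hn (by omega)
  have h4 := (rr_lt q n t i hq hn).resolve_right (by omega)
  set a := aa q n (2 * t) i
  set r := ((q : ℚ) ^ (2 * t) - (q : ℚ) ^ i) / ((q : ℚ) ^ n - (q : ℚ) ^ i)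
  set r' := ((q : ℚ) ^ (2 * t) - (q : ℚ) ^ (i + 1)) / ((q : ℚ) ^ n - (q : ℚ) ^ (i + 1))
  have h5 : 0 ≤ a * r * r' := by positivity
  nlinarith

lemma cc_lt (q n t i j : ℕ) (hq : 2 ≤ q) (hn : 2 * t + 1 ≤ n) (hij : i < j) (hj : j ≤ 2 * t) :
    cc q n t j < cc q n t i := by
  induction j, hij using Nat.le_induction with
  | base => exact cc_succ_lt q n t i hq hn (by omega)
  | succ j hij ih =>
    exact (cc_succ_lt q n t j hq hn (by omega)).trans (ih (by omega))

lemma cc_nonneg (q n t i : ℕ) (hq : 2 ≤ q) (hn : 2 * t + 1 ≤ n) (hi : i ≤ 2 * t) :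
    0 ≤ cc q n t i := by
  unfold cc
  rw [aa_succ q n (2 * t) i]
  have h1 := aa_pos q n t i hq hn hi
  have h4 := (rr_lt q n t i hq hn).resolve_right (by omega)
  nlinarith

/-- the lower bound for the probability of each event -/
def rho (q n t : ℕ) : ℚ :=
  aa q n (2 * t) (t + 1) + cc q n t t * ((q : ℚ) ^ t / ((q : ℚ) ^ t + 1))

lemma sum_split (c : ℕ → ℚ) (t : ℕ) : ∑ i ∈ Finset.range (2 * t + 1), c i =
    c t + ∑ j ∈ Finset.range t, (c j + c (2 * t - j)) := by
  rw [show 2 * t + 1 = t + 1 + t by ring, Finset.sum_range_add, Finset.sum_range_succ,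
    Finset.sum_add_distrib]
  have : ∑ x ∈ Finset.range t, c (t + 1 + x) = ∑ x ∈ Finset.range t, c (2 * t - x) := by
    rw [← Finset.sum_range_reflect]
    apply Finset.sum_congr rfl
    intro j hj
    rw [Finset.mem_range] at hj
    congr 1
    omega
  rw [this]; ring

lemma sum_cc (q n t : ℕ) :
    ∑ j ∈ Finset.range t, cc q n t (2 * t - j) = aa q n (2 * t) (t + 1) := by
  have : ∑ x ∈ Finset.range t, cc q n t (t + 1 + x) = ∑ x ∈ Finset.range t, cc q n t (2 * t - x) := by
    rw [← Finset.sum_range_reflect]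
    apply Finset.sum_congr rfl
    intro j hj
    rw [Finset.mem_range] at hj
    congr 1
    omega
  rw [← this]
  have h := Finset.sum_range_sub' (fun x => aa q n (2 * t) (t + 1 + x)) t
  unfold cc
  rw [show (∑ x ∈ Finset.range t, (aa q n (2 * t) (t + 1 + x) - aa q n (2 * t) (t + 1 + x + 1))) = _ from h]
  rw [show t + 1 + t = 2 * t + 1 by ring, aa_last]
  simp

lemma val_ge (q n t : ℕ) (hq : 2 ≤ q) (hn : 2 * t + 1 ≤ n) (p : ℕ → ℚ)
    (h1 : ∀ i ≤ 2 * t, 1 ≤ p i + p (2 * t - i)) (h2 : ((q : ℚ) ^ t + 1) * (1 - p t) ≤ 1) :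
    rho q n t + ∑ j ∈ Finset.range t, (cc q n t j - cc q n t (2 * t - j)) * p j ≤
      ∑ i ∈ Finset.range (2 * t + 1), cc q n t i * p i := by
  rw [sum_split (fun i => cc q n t i * p i)]
  unfold rho
  have hp : (q : ℚ) ^ t / ((q : ℚ) ^ t + 1) ≤ p t := by
    have : (0 : ℚ) < (q : ℚ) ^ t + 1 := by positivity
    rw [div_le_iff₀ this]
    linarith
  have h3 := mul_le_mul_of_nonneg_left hp (cc_nonneg q n t t hq hn (by omega))
  have h4 : aa q n (2 * t) (t + 1) + ∑ j ∈ Finset.range t, (cc q n t j - cc q n t (2 * t - j)) * p j ≤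
    ∑ j ∈ Finset.range t, (cc q n t j * p j + cc q n t (2 * t - j) * p (2 * t - j)) := by
    rw [← sum_cc, ← Finset.sum_add_distrib]
    apply Finset.sum_le_sum
    intro j hj
    rw [Finset.mem_range] at hj
    have h5 := h1 j (by omega)
    have h6 := cc_nonneg q n t (2 * t - j) hq hn (by omega)
    nlinarith
  linarith

lemma rho_eq (q n t : ℕ) (hq : 2 ≤ q) (ht : 1 ≤ t) (hn : 2 * t + 1 ≤ n) :
    (GaussQ q (n - 1) t / GaussQ q (2 * t - 1) t) * rho q n t = 1 := by
  have hq' : (2 : ℚ) ≤ q := by exact_mod_cast hq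
  have hpow : ∀ m : ℕ, 0 < m → (0 : ℚ) < (q : ℚ) ^ m - 1 := fun m hm =>
    sub_pos.2 (one_lt_pow₀ (by linarith) hm.ne')
  set R : ℚ := ∏ l ∈ Finset.range t, (((q : ℚ) ^ (2 * t) - (q : ℚ) ^ (l + 1)) / ((q : ℚ) ^ n - (q : ℚ) ^ (l + 1))) with hR
  have hRpos : 0 < R := by
    apply Finset.prod_pos
    intro l hl
    rw [Finset.mem_range] at hl
    exact rr_pos q n t (l + 1) hq hn (by omega)
  have hG : GaussQ q (n - 1) t / GaussQ q (2 * t - 1) t = R⁻¹ := by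
    unfold GaussQ
    rw [← Finset.prod_div_distrib, hR, ← Finset.prod_inv_distrib]
    apply Finset.prod_congr rfl
    intro l hl
    rw [Finset.mem_range] at hl
    have e1 : (q : ℚ) ^ (2 * t) - (q : ℚ) ^ (l + 1) = (q : ℚ) ^ (l + 1) * ((q : ℚ) ^ (2 * t - 1 - l) - 1) := by
      rw [mul_sub, ← pow_add, mul_one]; congr 2; omega
    have e2 : (q : ℚ) ^ n - (q : ℚ) ^ (l + 1) = (q : ℚ) ^ (l + 1) * ((q : ℚ) ^ (n - 1 - l) - 1) := by
      rw [mul_sub, ← pow_add, mul_one]; congr 2; omega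
    rw [e1, e2]
    have f1 := hpow (t - l) (by omega)
    have f2 := hpow (2 * t - 1 - l) (by omega)
    have f3 := hpow (n - 1 - l) (by omega)
    have f4 : (0 : ℚ) < (q : ℚ) ^ (l + 1) := by positivity
    field_simp
  have hA : aa q n (2 * t) (t + 1) = R * (((q : ℚ) ^ (2 * t) - 1) / ((q : ℚ) ^ n - 1)) := by
    unfold aa
    rw [Finset.prod_range_succ', hR]
    simp
  have hA' := aa_succ q n (2 * t) t
  have hrho : rho q n t = R := by
    unfold rho cc
    have hx : (2 : ℚ) ≤ (q : ℚ) ^ t := by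
      calc (2 : ℚ) ≤ q := hq'
        _ = (q : ℚ) ^ 1 := (pow_one _).symm
        _ ≤ (q : ℚ) ^ t := pow_le_pow_right₀ (by linarith) ht
    have hxy : (q : ℚ) ^ t < (q : ℚ) ^ n := pow_lt_pow_right₀ (by linarith) (by omega)
    have hsq : (q : ℚ) ^ (2 * t) = ((q : ℚ) ^ t) ^ 2 := by rw [← pow_mul]; congr 1; ring
    rw [hsq] at hA hA'
    rw [hA] at hA' ⊢
    set x := (q : ℚ) ^ t
    set y := (q : ℚ) ^ n
    have hx0 : x ≠ 0 := by linarith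
    have g1 : x - 1 ≠ 0 := by linarith
    have g2 : y - 1 ≠ 0 := by linarith
    have g3 : y - x ≠ 0 := by linarith
    have g4 : x + 1 ≠ 0 := by linarith
    have hat : aa q n (2 * t) t = R * ((x + 1) * (y - x)) / (x * (y - 1)) := by
      rw [eq_div_iff (mul_ne_zero hx0 g2)]
      have g5 : x ^ 2 - x ≠ 0 := by
        have : x ^ 2 - x = x * (x - 1) := by ring
        rw [this]; exact mul_ne_zero hx0 g1
      field_simp at hA'
      apply mul_left_cancel₀ g1
      linear_combination (-1) * hA'
    rw [hat]
    field_simp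
    ring
  rw [hG, hrho, inv_mul_cancel₀ hRpos.ne']

end num

section main
variable {K : Type*} [Field K] [Fintype K] {V : Type*} [AddCommGroup V] [Module K V]
  [FiniteDimensional K V]

/-- `A` is contained in no member of `F` but `G` -/
def OnlyIn (F : Set (Submodule K V)) (G A : Submodule K V) : Prop := ∀ G' ∈ F, A ≤ G' → G' = G

lemma only_or (t : ℕ) (F : Set (Submodule K V)) (hdim : ∀ A ∈ F, finrank K A = 2 * t)
    (hcf : IsCoverFree F) (G : Submodule K V) (hG : G ∈ F) (A C : Submodule K G)
    (h : A ⊔ C = ⊤) : OnlyIn F G (A.map G.subtype) ∨ OnlyIn F G (C.map G.subtype) := by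
  by_contra hne
  unfold OnlyIn at hne
  push Not at hne
  obtain ⟨⟨G₁, h1, h1', h1''⟩, ⟨G₂, h2, h2', h2''⟩⟩ := hne
  have hGs : G = A.map G.subtype ⊔ C.map G.subtype := by
    rw [← Submodule.map_sup, h]; simp
  have hle : G ≤ (G ⊓ G₁) ⊔ (G ⊓ G₂) := by
    conv_lhs => rw [hGs]
    apply sup_le_sup
    · exact le_inf (Submodule.map_subtype_le _ _) h1'
    · exact le_inf (Submodule.map_subtype_le _ _) h2'
  by_cases h12 : G₁ = G₂
  · subst h12
    have : G ≤ G₁ := by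
      rw [sup_idem] at hle
      exact hle.trans inf_le_right
    exact h1'' (Submodule.eq_of_le_of_finrank_eq this (by rw [hdim _ hG, hdim _ h1])).symm
  · exact hcf ⟨G, G₁, G₂, hG, h1, h2, h1''.symm, h2''.symm, h12, hle⟩

lemma main_struct (t : ℕ) (ht : 1 ≤ t) (hn : 2 * t + 1 ≤ finrank K V)
    (F : Set (Submodule K V)) (hdim : ∀ A ∈ F, finrank K A = 2 * t) (hcf : IsCoverFree F)
    (hcard : (F.ncard : ℚ) = GaussQ (Fintype.card K) (finrank K V - 1) t /
      GaussQ (Fintype.card K) (2 * t - 1) t) :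
    (∀ G ∈ F, ∀ S : Submodule K V, finrank K S = t + 1 → S ≤ G → OnlyIn F G S) ∧
    (∀ T S : Submodule K V, T ≤ S → finrank K T = t → finrank K S = t + 1 →
      (∃ G ∈ F, T ≤ G ∧ OnlyIn F G T) ∨ ∃ G ∈ F, S ≤ G) := by
  classical
  have hfV : Finite V := Module.finite_of_finite K
  have hFfin : F.Finite := Set.toFinite F
  set q := Fintype.card K with hqdef
  set n := finrank K V with hndef
  have hq : 2 ≤ q := Fintype.one_lt_card
  let e := flg K V
  have he : ∀ i ≤ n, finrank K (e i) = i := flg_rank K V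
  have hmono : Monotone e := flg_mono K V
  let P : (G : Submodule K V) → Submodule K G → Prop := fun G A => OnlyIn F G (A.map G.subtype)
  let s := hFfin.toFinset ×ˢ Finset.range (2 * t + 1)
  let ev : Submodule K V × ℕ → (V ≃ₗ[K] V) → Prop := fun x g =>
    mv g (e x.2) ≤ x.1 ∧ ¬ mv g (e (x.2 + 1)) ≤ x.1 ∧ OnlyIn F x.1 (mv g (e x.2))
  have hmemF : ∀ x ∈ s, x.1 ∈ F ∧ x.2 ≤ 2 * t := by
    intro x hx
    simp only [s, Finset.mem_product, Set.Finite.mem_toFinset, Finset.mem_range] at hx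
    exact ⟨hx.1, by omega⟩
  have hdisj' : ∀ g, ∀ x ∈ s, ∀ y ∈ s, ev x g → ev y g → x.2 ≤ y.2 → x = y := by
    rintro g ⟨G, i⟩ hx ⟨G', j⟩ hy ⟨h1, h2, h3⟩ ⟨h1', h2', h3'⟩ hij
    simp only at *
    have hG : G' = G := h3 G' (hmemF _ hy).1 ((Submodule.map_mono (hmono hij)).trans h1')
    subst hG
    rcases hij.eq_or_lt with h | h
    · rw [h]
    · exact absurd ((Submodule.map_mono (hmono h)).trans h1') h2
  have hdisj : ∀ g, ∀ x ∈ s, ∀ y ∈ s, ev x g → ev y g → x = y := by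
    intro g x hx y hy h1 h2
    rcases le_total x.2 y.2 with h | h
    · exact hdisj' g x hx y hy h1 h2 h
    · exact (hdisj' g y hy x hx h2 h1 h).symm
  have hprob : ∀ x ∈ s, pr (ev x) = cc q n t x.2 * pw (P x.1) x.2 := by
    intro x hx
    obtain ⟨hG, hi⟩ := hmemF x hx
    have h1 := pr_cond x.1 (OnlyIn F x.1) (e x.2) (e (x.2 + 1)) (hmono (Nat.le_succ _)) x.2
      (he _ (by omega))
    have h2 := pw_le x.1 x.2 (by omega)
    have h3 := pw_le x.1 (x.2 + 1) (by omega)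
    rw [hdim _ hG] at h2 h3
    unfold cc
    rw [← h2, ← h3]
    exact h1
  let val : Submodule K V → ℚ := fun G => ∑ i ∈ Finset.range (2 * t + 1), cc q n t i * pw (P G) i
  have hsum : ∑ x ∈ s, pr (ev x) = ∑ G ∈ hFfin.toFinset, val G := by
    rw [Finset.sum_congr rfl hprob, Finset.sum_product]
  have hle1 := sum_pr_le_one s ev hdisj
  rw [hsum] at hle1
  have hval : ∀ G ∈ F, rho q n t + ∑ j ∈ Finset.range t, (cc q n t j - cc q n t (2 * t - j)) * pw (P G) j
      ≤ val G := by
    intro G hG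
    apply val_ge q n t hq hn
    · intro i hi
      apply pw_compl (P G) (only_or t F hdim hcf G hG)
      rw [hdim _ hG]; omega
    · exact pw_spread t ht (hdim _ hG) (P G) (only_or t F hdim hcf G hG)
  have hterm : ∀ G, ∀ j ∈ Finset.range t, 0 ≤ (cc q n t j - cc q n t (2 * t - j)) * pw (P G) j := by
    intro G j hj
    rw [Finset.mem_range] at hj
    have := cc_lt q n t j (2 * t - j) hq hn (by omega) (by omega)
    exact mul_nonneg (by linarith) (pr_nonneg _)
  have hval' : ∀ G ∈ F, rho q n t ≤ val G := by
    intro G hG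
    have := hval G hG
    have := Finset.sum_nonneg (hterm G)
    linarith
  have hcard' : (hFfin.toFinset.card : ℚ) * rho q n t = 1 := by
    rw [← Set.ncard_eq_toFinset_card F hFfin, hcard]
    exact rho_eq q n t hq ht hn
  have hsumrho : ∑ G ∈ hFfin.toFinset, rho q n t = 1 := by
    rw [Finset.sum_const, nsmul_eq_mul, hcard']
  have hvaleq : ∀ G ∈ F, val G = rho q n t := by
    have h0 : ∑ G ∈ hFfin.toFinset, rho q n t = ∑ G ∈ hFfin.toFinset, val G := by
      apply le_antisymm
      · apply Finset.sum_le_sum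
        intro G hG
        exact hval' G (by simpa using hG)
      · rw [hsumrho]; exact hle1
    intro G hG
    exact ((Finset.sum_eq_sum_iff_of_le (fun G hG => hval' G (by simpa using hG))).1 h0 G
      (by simpa using hG)).symm
  have hpz : ∀ G ∈ F, ∀ j < t, pw (P G) j = 0 := by
    intro G hG j hj
    have h1 := hval G hG
    rw [hvaleq G hG] at h1
    have h2 : ∑ j ∈ Finset.range t, (cc q n t j - cc q n t (2 * t - j)) * pw (P G) j = 0 :=
      le_antisymm (by linarith) (Finset.sum_nonneg (hterm G))
    rw [Finset.sum_eq_zero_iff_of_nonneg (hterm G)] at h2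
    have h3 := h2 j (Finset.mem_range.2 hj)
    have := cc_lt q n t j (2 * t - j) hq hn (by omega) (by omega)
    rcases mul_eq_zero.1 h3 with h | h
    · linarith
    · exact h
  have hfull : ∀ G : Submodule K V, ∀ A : Submodule K V, A ≤ G →
      (A.submoduleOf G).map G.subtype = A := by
    intro G A hA
    simp [Submodule.submoduleOf, Submodule.map_comap_subtype, hA]
  constructor
  · intro G hG S hS hSG
    have h1 := hpz G hG (t - 1) (by omega)
    have h2 := pw_compl (P G) (only_or t F hdim hcf G hG) (t - 1) (t + 1)
      (by rw [hdim _ hG]; omega)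
    have h3 : pw (P G) (t + 1) = 1 := le_antisymm (pr_le_one _) (by linarith)
    have h4 := pw_one (P G) (S.submoduleOf G) (t + 1)
      (by rw [(Submodule.submoduleOfEquivOfLe hSG).finrank_eq, hS]) h3
    simp only [P] at h4
    rwa [hfull G S hSG] at h4
  · intro T S hTS hT hS
    obtain ⟨g, hg1, hg2⟩ := exists_map_eq₂ (e t) (e (t + 1)) T S (hmono (Nat.le_succ _)) hTS
      (by rw [he _ (by omega), hT]) (by rw [he _ (by omega), hS])
    have h1 : 1 ≤ ∑ x ∈ s, pr (ev x) := by
      rw [hsum, Finset.sum_congr rfl (fun G hG => hvaleq G (by simpa using hG)), hsumrho]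
    obtain ⟨⟨G, i⟩, hx, h2, h3, h4⟩ := exists_of_sum_pr s ev hdisj h1 g
    obtain ⟨hG, hi⟩ := hmemF _ hx
    simp only at h2 h3 h4 hG hi
    rcases lt_trichotomy i t with hit | hit | hit
    · exfalso
      have h5 := pw_zero (P G) ((mv g (e i)).submoduleOf G) i
        (by rw [(Submodule.submoduleOfEquivOfLe h2).finrank_eq, LinearEquiv.finrank_map_eq,
          he _ (by omega)]) (hpz G hG i hit)
      apply h5
      simp only [P]
      rwa [hfull G _ h2]
    · left
      subst hit
      unfold mv at h2 h4
      rw [hg1] at h2 h4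
      exact ⟨G, hG, h2, h4⟩
    · right
      refine ⟨G, hG, ?_⟩
      rw [← hg2]
      exact (Submodule.map_mono (hmono hit)).trans h2

lemma count_lemma (t : ℕ) (F : Set (Submodule K V)) (hdim : ∀ A ∈ F, finrank K A = 2 * t)
    (U : Submodule K V) (h : ∀ v, v ∉ U → ∃ G ∈ F, U ≤ G ∧ v ∈ G ∧ ∀ G' ∈ F, U ≤ G' → v ∈ G' → G' = G) :
    ({G ∈ F | U ≤ G}.ncard : ℚ) *
      ((Fintype.card K : ℚ) ^ (2 * t) - (Fintype.card K : ℚ) ^ finrank K U) =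
      (Fintype.card K : ℚ) ^ finrank K V - (Fintype.card K : ℚ) ^ finrank K U := by
  classical
  have hfV : Finite V := Module.finite_of_finite K
  let _ : Fintype V := Fintype.ofFinite V
  have hfin : {G ∈ F | U ≤ G}.Finite := Set.toFinite _
  rw [Set.ncard_eq_toFinset_card _ hfin]
  have h1 := card_filter_diff U (⊤ : Submodule K V) le_top
  rw [finrank_top] at h1
  rw [← h1]
  have h2 : (Finset.univ.filter (fun v : V => v ∉ U ∧ v ∈ (⊤ : Submodule K V))) =
      hfin.toFinset.biUnion (fun G => Finset.univ.filter (fun v : V => v ∉ U ∧ v ∈ G)) := by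
    ext v
    simp only [Finset.mem_filter, Finset.mem_univ, true_and, Submodule.mem_top, and_true,
      Finset.mem_biUnion, Set.Finite.mem_toFinset, Set.mem_setOf_eq]
    constructor
    · intro hv
      obtain ⟨G, a, b, c, _⟩ := h v hv
      exact ⟨G, ⟨a, b⟩, hv, c⟩
    · rintro ⟨G, _, hv, _⟩
      exact hv
  rw [h2, Finset.card_biUnion]
  · push_cast
    rw [Finset.sum_congr rfl (g := fun _ => (Fintype.card K : ℚ) ^ (2 * t) - (Fintype.card K : ℚ) ^ finrank K U)]
    · rw [Finset.sum_const, nsmul_eq_mul]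
    · intro G hG
      simp only [Set.Finite.mem_toFinset, Set.mem_setOf_eq] at hG
      rw [card_filter_diff U G hG.2, hdim _ hG.1]
  · intro G hG G' hG' hne
    have hG := (Set.Finite.mem_toFinset _).1 (Finset.mem_coe.1 hG)
    have hG' := (Set.Finite.mem_toFinset _).1 (Finset.mem_coe.1 hG')
    show Disjoint _ _
    rw [Finset.disjoint_filter]
    rintro v _ ⟨hv, hvG⟩ ⟨_, hvG'⟩
    obtain ⟨G₀, _, _, _, hu⟩ := h v hv
    exact hne ((hu G hG.1 hG.2 hvG).trans (hu G' hG'.1 hG'.2 hvG').symm)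

lemma ncard_one_iff (F : Set (Submodule K V)) (T : Submodule K V) :
    {G ∈ F | T ≤ G}.ncard = 1 ↔ ∃ G ∈ F, T ≤ G ∧ OnlyIn F G T := by
  rw [Set.ncard_eq_one]
  constructor
  · rintro ⟨G, hG⟩
    have : G ∈ {G ∈ F | T ≤ G} := by rw [hG]; rfl
    refine ⟨G, this.1, this.2, ?_⟩
    intro G' h1 h2
    have : G' ∈ {G ∈ F | T ≤ G} := ⟨h1, h2⟩
    rw [hG] at this
    exact this
  · rintro ⟨G, h1, h2, h3⟩
    refine ⟨G, ?_⟩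
    ext G'
    simp only [Set.mem_setOf_eq, Set.mem_singleton_iff]
    constructor
    · rintro ⟨a, b⟩; exact h3 G' a b
    · rintro rfl; exact ⟨h1, h2⟩

/-- two `t`-spaces over a common hyperplane -/
lemma exists_join {t : ℕ} {B T T' : Submodule K V} (ht : 1 ≤ t) (hB : finrank K B = t - 1)
    (hT : finrank K T = t) (hT' : finrank K T' = t) (hBT : B ≤ T) (hBT' : B ≤ T') (hne : T ≠ T') :
    ∃ S, T ≤ S ∧ T' ≤ S ∧ finrank K S = t + 1 := by
  refine ⟨T ⊔ T', le_sup_left, le_sup_right, ?_⟩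
  have h1 := Submodule.finrank_sup_add_finrank_inf_eq T T'
  have h2 : finrank K B ≤ finrank K (T ⊓ T' : Submodule K V) :=
    Submodule.finrank_mono (le_inf hBT hBT')
  have h3 : finrank K (T ⊓ T' : Submodule K V) < t := by
    by_contra hlt
    push Not at hlt
    have e1 : T ⊓ T' = T := Submodule.eq_of_le_of_finrank_le inf_le_left (by omega)
    have e2 : T ⊓ T' = T' := Submodule.eq_of_le_of_finrank_le inf_le_right (by omega)
    exact hne (e1.symm.trans e2)
  omega

end main

end CF

theorem stmt18 (q n t : ℕ) (K : Type*) [Field K] [Fintype K] (hK : Fintype.card K = q)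
    (V : Type*) [AddCommGroup V] [Module K V] [FiniteDimensional K V]
    (hV : Module.finrank K V = n) (ht : 2 ≤ t) (hn : 2 * t + 1 ≤ n)
    (F : Set (Submodule K V)) (hdim : ∀ A ∈ F, Module.finrank K A = 2 * t)
    (hcf : IsCoverFree F)
    (hcard : (F.ncard : ℚ) = GaussQ q (n - 1) t / GaussQ q (2 * t - 1) t)
    (B : Submodule K V) (hB : Module.finrank K B = t - 1)
    (hBshadow : ∃ A ∈ OmegaSet F t, B ≤ A) :
    ({G ∈ F | B ≤ G}.ncard : ℚ) ≤ ((q : ℚ) ^ (n - t) - 1) / ((q : ℚ) ^ t - 1) ∧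
    (({G ∈ F | B ≤ G}.ncard : ℚ) = ((q : ℚ) ^ (n - t) - 1) / ((q : ℚ) ^ t - 1) ↔
      ∃! T : Submodule K V, Module.finrank K T = t ∧ B ≤ T ∧ 1 < {G ∈ F | T ≤ G}.ncard) := by
  subst hK hV
  obtain ⟨E1, E2⟩ := CF.main_struct t (by omega) hn F hdim hcf hcard
  have hfV : Finite V := Module.finite_of_finite K
  set q := Fintype.card K with hqdef
  set n := Module.finrank K V with hndef
  have hq : 2 ≤ q := Fintype.one_lt_card
  have hq' : (2 : ℚ) ≤ q := by exact_mod_cast hq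
  have hx : (q : ℚ) ≤ (q : ℚ) ^ t := by
    calc (q : ℚ) = (q : ℚ) ^ 1 := (pow_one _).symm
      _ ≤ (q : ℚ) ^ t := pow_le_pow_right₀ (by linarith) (by omega)
  have hxz : (q : ℚ) ^ t < (q : ℚ) ^ (n - t) := pow_lt_pow_right₀ (by linarith) (by omega)
  obtain ⟨A, ⟨hAr, hA1⟩, hBA⟩ := hBshadow
  rw [CF.ncard_one_iff] at hA1
  obtain ⟨GA, hGA, hAGA, hAonly⟩ := hA1
  -- any two `t`-spaces over `B`, one of which is not own, lie in a common member
  have hjoin : ∀ T T' : Submodule K V, Module.finrank K T = t → Module.finrank K T' = t → B ≤ T →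
      B ≤ T' → T ≠ T' → (¬ ∃ G ∈ F, T ≤ G ∧ CF.OnlyIn F G T) → ∃ G ∈ F, T ≤ G ∧ T' ≤ G := by
    intro T T' hT hT' hBT hBT' hne hno
    obtain ⟨S, h1, h2, h3⟩ := CF.exists_join (by omega) hB hT hT' hBT hBT' hne
    rcases E2 T S h1 hT h3 with h | ⟨G, hG, hSG⟩
    · exact absurd h hno
    · exact ⟨G, hG, h1.trans hSG, h2.trans hSG⟩
  have hGAT : ∀ T : Submodule K V, Module.finrank K T = t → B ≤ T →
      (¬ ∃ G ∈ F, T ≤ G ∧ CF.OnlyIn F G T) → T ≤ GA := by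
    intro T hT hBT hno
    have hne : T ≠ A := by
      rintro rfl
      exact hno ⟨GA, hGA, hAGA, hAonly⟩
    obtain ⟨G, hG, h1, h2⟩ := hjoin T A hT hAr hBT hBA hne hno
    rw [hAonly G hG h2] at h1
    exact h1
  have hall : ∀ T : Submodule K V, Module.finrank K T = t → B ≤ T →
      (¬ ∃ G ∈ F, T ≤ G ∧ CF.OnlyIn F G T) → ∀ G ∈ F, B ≤ G → T ≤ G := by
    intro T hT hBT hno G hG hBG
    by_contra hTG
    have hle : G ≤ GA := by
      intro v hv
      by_cases hvB : v ∈ B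
      · exact hAGA (hBA hvB)
      have hT' := CF.finrank_sup_span B v hvB
      set T' := B ⊔ Submodule.span K {v} with hT'def
      have hT'r : Module.finrank K T' = t := by rw [hT', hB]; omega
      have hT'G : T' ≤ G := sup_le hBG (by rw [Submodule.span_le]; simpa using hv)
      have hne : T ≠ T' := by
        rintro h
        exact hTG (h ▸ hT'G)
      obtain ⟨G', hG', h1, h2⟩ := hjoin T T' hT hT'r hBT le_sup_left hne hno
      have hno' : ¬ ∃ G ∈ F, T' ≤ G ∧ CF.OnlyIn F G T' := by
        rintro ⟨G₀, _, _, h0⟩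
        have e1 := h0 G hG hT'G
        have e2 := h0 G' hG' h2
        rw [e1, ← e2] at hTG
        exact hTG h1
      have := hGAT T' hT'r le_sup_left hno'
      exact this ((le_sup_right : _ ≤ T') (Submodule.mem_span_singleton_self v))
    have heq : G = GA := Submodule.eq_of_le_of_finrank_eq hle (by rw [hdim _ hG, hdim _ hGA])
    exact hTG (heq ▸ hGAT T hT hBT hno)
  by_cases hex : ∃ T : Submodule K V, Module.finrank K T = t ∧ B ≤ T ∧
      ¬ ∃ G ∈ F, T ≤ G ∧ CF.OnlyIn F G T
  · obtain ⟨T, hT, hBT, hno⟩ := hex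
    have hset : ∀ T : Submodule K V, Module.finrank K T = t → B ≤ T →
        (¬ ∃ G ∈ F, T ≤ G ∧ CF.OnlyIn F G T) → {G ∈ F | B ≤ G} = {G ∈ F | T ≤ G} := by
      intro T hT hBT hno
      ext G
      simp only [Set.mem_setOf_eq]
      exact ⟨fun h => ⟨h.1, hall T hT hBT hno G h.1 h.2⟩, fun h => ⟨h.1, hBT.trans h.2⟩⟩
    have hcnt := CF.count_lemma t F hdim T (by
      intro v hv
      have h1 := CF.finrank_sup_span T v hv
      rw [hT] at h1
      rcases E2 T _ le_sup_left hT h1 with h | ⟨G, hG, hSG⟩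
      · exact absurd h hno
      · refine ⟨G, hG, le_sup_left.trans hSG, hSG (Submodule.mem_sup_right (Submodule.mem_span_singleton_self v)), ?_⟩
        intro G' hG' h2 h3
        exact E1 G hG _ h1 hSG G' hG' (sup_le h2 (by rw [Submodule.span_le]; simpa using h3)))
    rw [hT] at hcnt
    have hval : ({G ∈ F | T ≤ G}.ncard : ℚ) = ((q : ℚ) ^ (n - t) - 1) / ((q : ℚ) ^ t - 1) := by
      rw [eq_div_iff (by linarith)]
      have e1 : (q : ℚ) ^ (2 * t) = (q : ℚ) ^ t * (q : ℚ) ^ t := by rw [← pow_add]; congr 1; ring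
      have e2 : (q : ℚ) ^ n = (q : ℚ) ^ t * (q : ℚ) ^ (n - t) := by rw [← pow_add]; congr 1; omega
      rw [e1, e2] at hcnt
      have hx0 : (q : ℚ) ^ t ≠ 0 := by positivity
      apply mul_left_cancel₀ hx0
      linear_combination hcnt
    have hgt : 1 < {G ∈ F | T ≤ G}.ncard := by
      have : (1 : ℚ) < ({G ∈ F | T ≤ G}.ncard : ℚ) := by
        rw [hval, lt_div_iff₀ (by linarith)]
        linarith
      exact_mod_cast this
    have hBT' := hset T hT hBT hno
    rw [hBT']
    refine ⟨hval.le, fun _ => ?_, fun _ => hval⟩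
    refine ⟨T, ⟨hT, hBT, hgt⟩, ?_⟩
    rintro T' ⟨hT', hBT'', hgt'⟩
    by_contra hne
    have hno' : ¬ ∃ G ∈ F, T' ≤ G ∧ CF.OnlyIn F G T' := by
      rw [← CF.ncard_one_iff]; omega
    have hs' := hset T' hT' hBT'' hno'
    obtain ⟨S, h1, h2, h3⟩ := CF.exists_join (by omega) hB hT hT' hBT hBT'' (Ne.symm hne)
    have hS : ∀ G ∈ {G ∈ F | T ≤ G}, ∃ S : Submodule K V, S = T ⊔ T' ∧ S ≤ G := by
      intro G hG
      refine ⟨_, rfl, sup_le hG.2 ?_⟩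
      rw [← hBT', hs'] at hG
      exact hG.2
    have hr : Module.finrank K (T ⊔ T' : Submodule K V) = t + 1 := by
      have e1 : Module.finrank K (T ⊔ T' : Submodule K V) ≤ t + 1 := by
        rw [← h3]; exact Submodule.finrank_mono (sup_le h1 h2)
      have e2 : t < Module.finrank K (T ⊔ T' : Submodule K V) := by
        by_contra hlt
        push Not at hlt
        have f1 : T = T ⊔ T' := Submodule.eq_of_le_of_finrank_le le_sup_left (by omega)
        have f2 : T' = T ⊔ T' := Submodule.eq_of_le_of_finrank_le le_sup_right (by omega)
        exact hne (f2.trans f1.symm)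
      omega
    obtain ⟨G₁, hG₁, G₂, hG₂, hG12⟩ := (Set.one_lt_ncard_iff (Set.toFinite _)).1 hgt |> fun ⟨a, b, c, d, e⟩ =>
      (⟨a, c, b, d, e⟩ : ∃ a, a ∈ {G ∈ F | T ≤ G} ∧ ∃ b, b ∈ {G ∈ F | T ≤ G} ∧ a ≠ b)
    obtain ⟨_, rfl, hS1⟩ := hS G₁ hG₁
    obtain ⟨_, rfl, hS2⟩ := hS G₂ hG₂
    exact hG12 (E1 G₁ hG₁.1 _ hr hS1 G₂ hG₂.1 hS2).symm
  · push Not at hex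
    have hcnt := CF.count_lemma t F hdim B (by
      intro v hv
      have h1 := CF.finrank_sup_span B v hv
      obtain ⟨G, hG, h2, h3⟩ := hex (B ⊔ Submodule.span K {v}) (by rw [h1, hB]; omega) le_sup_left
      refine ⟨G, hG, le_sup_left.trans h2, h2 (Submodule.mem_sup_right (Submodule.mem_span_singleton_self v)), ?_⟩
      intro G' hG' h4 h5
      exact h3 G' hG' (sup_le h4 (by rw [Submodule.span_le]; simpa using h5)))
    rw [hB] at hcnt
    have hlt : ({G ∈ F | B ≤ G}.ncard : ℚ) < ((q : ℚ) ^ (n - t) - 1) / ((q : ℚ) ^ t - 1) := by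
      have e1 : (q : ℚ) ^ (2 * t) = (q : ℚ) ^ (t - 1) * (q * (q : ℚ) ^ t) := by
        rw [← pow_succ', ← pow_add]; congr 1; omega
      have e2 : (q : ℚ) ^ n = (q : ℚ) ^ (t - 1) * (q * (q : ℚ) ^ (n - t)) := by
        rw [← pow_succ', ← pow_add]; congr 1; omega
      rw [e1, e2] at hcnt
      have hx0 : (q : ℚ) ^ (t - 1) ≠ 0 := by positivity
      have h6 : ({G ∈ F | B ≤ G}.ncard : ℚ) * (q * (q : ℚ) ^ t - 1) = q * (q : ℚ) ^ (n - t) - 1 := by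
        apply mul_left_cancel₀ hx0
        linear_combination hcnt
      have hpos : (0 : ℚ) < q * (q : ℚ) ^ t - 1 := by nlinarith
      rw [← eq_div_iff hpos.ne'] at h6
      rw [h6, div_lt_div_iff₀ hpos (by linarith)]
      nlinarith
    refine ⟨hlt.le, fun h => absurd h hlt.ne, ?_⟩
    rintro ⟨T, ⟨hT, hBT, hgt⟩, _⟩
    have := (CF.ncard_one_iff F T).2 (hex T hT hBT)
    omega
end
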